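/- arXiv:2605.15499 — 2 statements merged into one kernel-verified Lean document; each statement's English description precedes it below -/
import Mathlib

section
/- Fix constants s > 0, K₁ < 0 < K₂, τ₀ > 0, C₃ > 0, and a differentiable function τ : I → ℝ on an interval I with τ(t) ≥ τ₀ and |τ'(t)| ≤ C₃·τ(t)^{5/4} for all t ∈ I. Set A*(t) = K₁τ(t), ζ*(t) = K₂τ(t), and define ρ₁ = e^{−sA*}(ζ*)^{−3/2} and ρ̂ = e^{−sA*}(ζ*)^{−3/4}. Then there exists a constant C > 0 such that |d/dt (ρ₁(t)²)| ≤ C·ρ̂(t)² for every t ∈ I. -/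
/-- The Carleman weight `ρ₁ = e^{−sA*}(ζ*)^{−3/2}` with `A* = K₁τ`, `ζ* = K₂τ`. -/
noncomputable def rho1 (s K₁ K₂ : ℝ) (τ : ℝ → ℝ) (t : ℝ) : ℝ :=
  Real.exp (-(s * (K₁ * τ t))) * (K₂ * τ t) ^ (-(3:ℝ)/2)

/-- The Carleman weight `ρ̂ = e^{−sA*}(ζ*)^{−3/4}` with `A* = K₁τ`, `ζ* = K₂τ`. -/
noncomputable def rhoHat (s K₁ K₂ : ℝ) (τ : ℝ → ℝ) (t : ℝ) : ℝ :=
  Real.exp (-(s * (K₁ * τ t))) * (K₂ * τ t) ^ (-(3:ℝ)/4)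

/-- If `τ ≥ τ₀ > 0` and `|τ'| ≤ C₃ τ^{5/4}` on the interval `I`, then the weights
`ρ₁ = e^{−sA*}(ζ*)^{−3/2}` and `ρ̂ = e^{−sA*}(ζ*)^{−3/4}` built from `A* = K₁τ`
(`K₁ < 0`) and `ζ* = K₂τ` (`K₂ > 0`) satisfy `|(ρ₁²)'| ≤ C ρ̂²` on `I` for some `C > 0`. -/
theorem rho1_sq_derivative_bound
    (s K₁ K₂ τ₀ C₃ : ℝ) (hs : 0 < s) (hK₁ : K₁ < 0) (hK₂ : 0 < K₂)
    (hτ₀ : 0 < τ₀) (hC₃ : 0 < C₃)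
    (I : Set ℝ) (τ τ' : ℝ → ℝ)
    (hτder : ∀ t ∈ I, HasDerivAt τ (τ' t) t)
    (hτlb : ∀ t ∈ I, τ₀ ≤ τ t)
    (hτgrow : ∀ t ∈ I, |τ' t| ≤ C₃ * τ t ^ ((5:ℝ)/4)) :
    ∃ C > (0:ℝ), ∀ t ∈ I,
      |deriv (fun u => rho1 s K₁ K₂ τ u ^ 2) t| ≤ C * rhoHat s K₁ K₂ τ t ^ 2 := by
  have hL : 0 < 2 * s * (-K₁) + 3 / τ₀ := by
    have : 0 < -K₁ := by linarith
    positivity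
  refine ⟨(2 * s * (-K₁) + 3 / τ₀) * C₃ * (K₂ ^ (-(3:ℝ)/2) * τ₀ ^ (-(1:ℝ)/4)), by positivity, ?_⟩
  intro t ht
  have hd := hτder t ht
  have hlb := hτlb t ht
  have hg := hτgrow t ht
  have hx : 0 < τ t := lt_of_lt_of_le hτ₀ hlb
  have hy : 0 < K₂ * τ t := mul_pos hK₂ hx
  have h1 : HasDerivAt (fun u => Real.exp (-(s * (K₁ * τ u))))
      (Real.exp (-(s * (K₁ * τ t))) * (-(s * (K₁ * τ' t)))) t :=
    (((hd.const_mul K₁).const_mul s).neg).exp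
  have h2 : HasDerivAt (fun u => (K₂ * τ u) ^ (-(3:ℝ)/2))
      (K₂ * τ' t * (-(3:ℝ)/2) * (K₂ * τ t) ^ (-(3:ℝ)/2 - 1)) t :=
    (hd.const_mul K₂).rpow_const (Or.inl hy.ne')
  have h3 := (h1.mul h2).pow 2
  have h4 : deriv (fun u => rho1 s K₁ K₂ τ u ^ 2) t = _ := h3.deriv
  rw [h4]
  have hq : ((K₂ * τ t) ^ (-(3:ℝ)/4)) ^ 2 = (K₂ * τ t) ^ (-(3:ℝ)/2) := by
    rw [← Real.rpow_natCast, ← Real.rpow_mul hy.le]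
    norm_num
  have hr : (K₂ * τ t) ^ (-(3:ℝ)/2) * τ t ^ ((5:ℝ)/4)
      ≤ K₂ ^ (-(3:ℝ)/2) * τ₀ ^ (-(1:ℝ)/4) := by
    rw [Real.mul_rpow hK₂.le hx.le, mul_assoc, ← Real.rpow_add hx]
    have : τ t ^ (-(3:ℝ)/2 + 5/4) ≤ τ₀ ^ (-(1:ℝ)/4) := by
      have e : (-(3:ℝ)/2 + 5/4) = -(1:ℝ)/4 := by norm_num
      rw [e]
      exact Real.rpow_le_rpow_of_nonpos hτ₀ hlb (by norm_num)
    gcongr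
  unfold rhoHat
  rw [mul_pow _ _ 2, hq]
  simp only [Pi.mul_apply]
  rw [Real.rpow_sub_one hy.ne']
  have hr0 : 0 < (K₂ * τ t) ^ (-(3:ℝ)/2) := by positivity
  have hE : 0 < Real.exp (-(s * (K₁ * τ t))) := Real.exp_pos _
  generalize (K₂ * τ t) ^ (-(3:ℝ)/2) = r at *
  generalize Real.exp (-(s * (K₁ * τ t))) = E at *
  generalize K₂ ^ (-(3:ℝ)/2) * τ₀ ^ (-(1:ℝ)/4) = M at *
  have hB : |2 * s * (-K₁) - 3 / τ t| ≤ 2 * s * (-K₁) + 3 / τ₀ := by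
    have a1 : 3 / τ t ≤ 3 / τ₀ := by gcongr
    have a2 : 0 < 3 / τ t := by positivity
    have a3 : 0 < s * (-K₁) := mul_pos hs (by linarith)
    rw [abs_le]
    constructor <;> nlinarith
  generalize hLd : 2 * s * (-K₁) + 3 / τ₀ = L at *
  calc _ = |E ^ 2 * r ^ 2 * ((2 * s * (-K₁) - 3 / τ t) * τ' t)| := by
        congr 1
        field_simp
        push_cast
        ring
    _ = E ^ 2 * r ^ 2 * (|2 * s * (-K₁) - 3 / τ t| * |τ' t|) := by
        rw [abs_mul, abs_mul (2 * s * (-K₁) - 3 / τ t), abs_of_pos (by positivity : 0 < E ^ 2 * r ^ 2)]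
    _ ≤ E ^ 2 * r ^ 2 * (L * (C₃ * τ t ^ ((5:ℝ)/4))) := by gcongr
    _ = L * C₃ * (r * τ t ^ ((5:ℝ)/4)) * (E ^ 2 * r) := by ring
    _ ≤ L * C₃ * M * (E ^ 2 * r) := by gcongr
end

section
/- Let T > 0, Q = (0,1)×(0,T), and let a : [0,1] → ℝ be continuous, nonnegative, and continuously differentiable on (0,1]. Let b : [0,T] → ℝ be continuous with 0 < m ≤ b(t) ≤ M, and let c₁, d₁ : Q → ℝ be measurable with |c₁|, |d₁| ≤ Λ. Fix constants s > 0, K₁ < 0 < K₂, τ₀ > 0, ζ₀ ≥ 1, C₃ > 0 and a differentiable function τ : [0,T) → ℝ with τ ≥ τ₀ and |τ'| ≤ C₃τ^{5/4}; set A* = K₁τ, ζ* = K₂τ, ζ̂ = ζ*/ζ₀, ρ₀ = e^{−sA*}, ρ₁ = e^{−sA*}(ζ*)^{−3/2}, ρ̂ = e^{−sA*}(ζ*)^{−3/4}, ρ₂ = e^{−3sA*/2}(ζ̂)^{−1}. Let ω₁ ⊂ (0,1) be open, and let z : [0,1]×[0,T] → ℝ be continuous, with z_x, (a z_x)_x and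 z_t existing and continuous on (0,1)×(0,T), satisfying z_t − b(t)(a(x)z_x)_x − d₁(x,t)√(a(x)) z_x + c₁(x,t)z = h̃·1_{ω₁} + G pointwise in (0,1)×(0,T), z(0,t) = z(1,t) = 0 for all t, and z(x,0) = z₀(x), where z₀ is differentiable on (0,1) with ∫₀¹ a(x) z₀'(x)² dx < ∞; assume all the integrals below are finite. Then there exists a constant C > 0, depending only on T, m, M, Λ and the weight constants (and not on z, h̃, G, z₀), such that sup_{t∈[0,T)} ρ₁(t)² ∫₀¹ a(x) z_x(x,t)² dx + ∫₀ᵀ∫₀¹ ρ₁² ( z_t² + ((a(x)z_x)_x)² ) dx dt ≤ C ( ∫₀ᵀ∫₀¹ ρ₀² z² dx dt + ∫₀ᵀ∫_{ω₁} ρ₁² h̃² dx dt + ∫₀ᵀ∫₀¹ ρ₂² G² dx dt + ∫₀¹ z₀² dx + ∫₀¹ a(x) z₀'(x)² dx ). -/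
open MeasureTheory Set

/-- The Carleman weight `ρ₀ = e^{−sA*}` with `A* = K₁τ`. -/
noncomputable def rho0 (s K₁ : ℝ) (τ : ℝ → ℝ) (t : ℝ) : ℝ :=
  Real.exp (-(s * (K₁ * τ t)))

/-- The Carleman weight `ρ₂ = e^{−3sA*/2}(ζ̂)⁻¹`, `ζ̂ = ζ*/ζ₀`. -/
noncomputable def rho2 (s K₁ K₂ ζ₀ : ℝ) (τ : ℝ → ℝ) (t : ℝ) : ℝ :=
  Real.exp (-(3 * s * (K₁ * τ t) / 2)) * (K₂ * τ t / ζ₀)⁻¹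


/-- Joint measurability of directional derivatives. -/
lemma meas_dir {f f' : ℝ × ℝ → ℝ} (hf : Measurable f) {Q : Set (ℝ × ℝ)} (hQ : MeasurableSet Q)
    (v : ℝ × ℝ) (h : ∀ q ∈ Q, HasDerivAt (fun u : ℝ => f (q + u • v)) (f' q) 0) :
    Measurable (Q.indicator f') := by
  refine measurable_of_tendsto_metrizable
    (f := fun n : ℕ => Q.indicator (fun q => ((1:ℝ)/((n:ℝ)+1))⁻¹ *
      (f (q + ((1:ℝ)/((n:ℝ)+1)) • v) - f q))) ?_ ?_
  · intro n
    refine Measurable.indicator ?_ hQ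
    have : Measurable (fun q : ℝ × ℝ => q + ((1:ℝ)/((n:ℝ)+1)) • v) := by fun_prop
    exact measurable_const.mul ((hf.comp this).sub hf)
  · rw [tendsto_pi_nhds]
    intro q
    by_cases hq : q ∈ Q
    · simp only [indicator_of_mem hq]
      have h1 := (h q hq).tendsto_slope_zero
      have h2 : Filter.Tendsto (fun n : ℕ => (1:ℝ)/((n:ℝ)+1)) Filter.atTop
          (nhdsWithin 0 {0}ᶜ) := by
        refine tendsto_nhdsWithin_iff.2 ⟨tendsto_one_div_add_atTop_nhds_zero_nat, ?_⟩
        refine Filter.Eventually.of_forall fun n => ?_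
        have : (0:ℝ) < 1/((n:ℝ)+1) := by positivity
        exact this.ne'
      have h3 := h1.comp h2
      simpa [Function.comp_def] using h3
    · simp only [indicator_of_notMem hq]
      exact tendsto_const_nhds

/-- measurability of a pointwise derivative on an interval. -/
lemma meas_deriv1 {u u' : ℝ → ℝ} {s : Set ℝ} (hs : MeasurableSet s)
    (h : ∀ x ∈ s, HasDerivAt u (u' x) x) :
    AEStronglyMeasurable u' (volume.restrict s) := by
  refine (measurable_deriv u).aestronglyMeasurable.congr ?_
  refine (ae_restrict_mem hs).mono fun x hx => ?_
  exact (h x hx).deriv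

lemma cross_int {a u' y' : ℝ → ℝ} (ha : Continuous a) (ha0 : ∀ x, 0 ≤ a x) {s : Set ℝ}
    (hu : AEStronglyMeasurable u' (volume.restrict s))
    (hy : AEStronglyMeasurable y' (volume.restrict s))
    (hiu : IntegrableOn (fun x => a x * u' x ^ 2) s)
    (hiy : IntegrableOn (fun x => a x * y' x ^ 2) s) :
    IntegrableOn (fun x => a x * (u' x * y' x)) s := by
  refine Integrable.mono' (hiu.add hiy) (ha.aestronglyMeasurable.mul (hu.mul hy)) ?_
  refine Filter.Eventually.of_forall fun x => ?_
  have := ha0 x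
  simp only [Pi.add_apply, Real.norm_eq_abs, abs_mul, abs_of_nonneg this]
  have h1 : |u' x| * |y' x| ≤ u' x ^ 2 + y' x ^ 2 := by
    nlinarith [sq_nonneg (|u' x| - |y' x|), sq_abs (u' x), sq_abs (y' x), sq_nonneg (u' x),
      sq_nonneg (y' x)]
  nlinarith

/-- Integration by parts. -/
lemma ibp {a u' y y' w : ℝ → ℝ} (ha : Continuous a) (ha0 : ∀ x, 0 ≤ a x)
    (hu : AEStronglyMeasurable u' (volume.restrict (Ioo 0 1)))
    (hw : ∀ x ∈ Ioo (0:ℝ) 1, HasDerivAt (fun x => a x * u' x) (w x) x)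
    (hiw : IntegrableOn w (Ioo 0 1))
    (hiu : IntegrableOn (fun x => a x * u' x ^ 2) (Ioo 0 1))
    (hyc : Continuous y) (hy : ∀ x ∈ Ioo (0:ℝ) 1, HasDerivAt y (y' x) x)
    (hy0 : y 0 = 0) (hy1 : y 1 = 0)
    (hiy : IntegrableOn (fun x => a x * y' x ^ 2) (Ioo 0 1)) :
    ∫ x in Ioo (0:ℝ) 1, a x * (u' x * y' x) = - ∫ x in Ioo (0:ℝ) 1, w x * y x := by
  have hym := meas_deriv1 measurableSet_Ioo hy
  have hc := cross_int ha ha0 hu hym hiu hiy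
  have hwy : IntegrableOn (fun x => w x * y x) (Ioo 0 1) := by
    obtain ⟨B, hB⟩ := isCompact_Icc.exists_bound_of_continuousOn (hyc.continuousOn (s := Icc 0 1))
    refine Integrable.mul_bdd (c := B) hiw hyc.aestronglyMeasurable ?_
    refine (ae_restrict_mem measurableSet_Ioo).mono fun x hx => hB x ⟨hx.1.le, hx.2.le⟩
  set I := ∫ x in Ioo (0:ℝ) 1, |w x| with hI
  have hbd : ∀ x ∈ Ioo (0:ℝ) 1, |a x * u' x| ≤ |a (1/2) * u' (1/2)| + I := by
    intro x hx
    have hh : (1/2:ℝ) ∈ Ioo (0:ℝ) 1 := by constructor <;> norm_num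
    have hsub : uIcc (1/2:ℝ) x ⊆ Ioo 0 1 := by
      intro v hv
      exact (ordConnected_Ioo.uIcc_subset hh hx) hv
    have hii : IntervalIntegrable w volume (1/2) x :=
      intervalIntegrable_iff.2 (hiw.mono_set (uIoc_subset_uIcc.trans hsub))
    have h1 := intervalIntegral.integral_eq_sub_of_hasDerivAt (fun v hv => hw v (hsub hv)) hii
    have h2 : |∫ v in (1/2)..x, w v| ≤ I := by
      refine (intervalIntegral.norm_integral_le_integral_norm_uIoc (f := w) (a := 1/2) (b := x)
        (μ := volume)).trans ?_
      refine setIntegral_mono_set hiw.abs ?_ ?_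
      · exact Filter.Eventually.of_forall fun v => abs_nonneg _
      · exact (uIoc_subset_uIcc.trans hsub).eventuallyLE
    rw [h1] at h2
    have := abs_sub_abs_le_abs_sub (a x * u' x) (a (1/2) * u' (1/2))
    linarith
  have hlim : ∀ (l : Filter ℝ), (∀ᶠ x in l, x ∈ Ioo (0:ℝ) 1) → Filter.Tendsto y l (nhds 0) →
      Filter.Tendsto (fun x => (a x * u' x) * y x) l (nhds 0) := by
    intro l hl hyl
    have h3 : Filter.Tendsto (fun x => (|a (1/2) * u' (1/2)| + I) * |y x|) l (nhds 0) := by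
      have := hyl.abs.const_mul (|a (1/2) * u' (1/2)| + I)
      simpa using this
    refine squeeze_zero_norm' ?_ h3
    filter_upwards [hl] with x hx
    rw [Real.norm_eq_abs, abs_mul]
    exact mul_le_mul_of_nonneg_right (hbd x hx) (abs_nonneg _)
  have h0 := hlim (nhdsWithin 0 (Ioi 0)) (Ioo_mem_nhdsGT one_pos)
    (by have := hyc.tendsto 0; rw [hy0] at this; exact this.mono_left nhdsWithin_le_nhds)
  have h1 := hlim (nhdsWithin 1 (Iio 1)) (Ioo_mem_nhdsLT one_pos)
    (by have := hyc.tendsto 1; rw [hy1] at this; exact this.mono_left nhdsWithin_le_nhds)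
  have hintg : IntegrableOn (fun x => w x * y x + a x * (u' x * y' x)) (Ioo 0 1) := hwy.add hc
  have hder : ∀ x ∈ Ioo (0:ℝ) 1, HasDerivAt (fun x => (a x * u' x) * y x)
      (w x * y x + a x * (u' x * y' x)) x := by
    intro x hx
    have := (hw x hx).mul (hy x hx)
    refine this.congr_deriv ?_
    ring
  have hintg' : IntervalIntegrable (fun x => w x * y x + a x * (u' x * y' x)) volume 0 1 := by
    rw [intervalIntegrable_iff_integrableOn_Ioo_of_le zero_le_one]
    exact hintg
  have key := intervalIntegral.integral_eq_sub_of_hasDerivAt_of_tendsto one_pos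
    hder hintg' h0 h1
  rw [intervalIntegral.integral_of_le zero_le_one, integral_Ioc_eq_integral_Ioo,
    integral_add hwy hc] at key
  linarith

/-- Subgradient inequality. -/
lemma subgrad {a u u' y y' w : ℝ → ℝ} (ha : Continuous a) (ha0 : ∀ x, 0 ≤ a x)
    (hw : ∀ x ∈ Ioo (0:ℝ) 1, HasDerivAt (fun x => a x * u' x) (w x) x)
    (hiw : IntegrableOn w (Ioo 0 1))
    (huc : Continuous u) (hu : ∀ x ∈ Ioo (0:ℝ) 1, HasDerivAt u (u' x) x)
    (hu0 : u 0 = 0) (hu1 : u 1 = 0)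
    (hiu : IntegrableOn (fun x => a x * u' x ^ 2) (Ioo 0 1))
    (hyc : Continuous y) (hy : ∀ x ∈ Ioo (0:ℝ) 1, HasDerivAt y (y' x) x)
    (hy0 : y 0 = 0) (hy1 : y 1 = 0)
    (hiy : IntegrableOn (fun x => a x * y' x ^ 2) (Ioo 0 1)) :
    (∫ x in Ioo (0:ℝ) 1, a x * u' x ^ 2) - (∫ x in Ioo (0:ℝ) 1, a x * y' x ^ 2) ≤
      - 2 * ∫ x in Ioo (0:ℝ) 1, w x * (u x - y x) := by
  have hum := meas_deriv1 measurableSet_Ioo hu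
  have hym := meas_deriv1 measurableSet_Ioo hy
  have hc := cross_int ha ha0 hum hym hiu hiy
  have hv : ∀ x ∈ Ioo (0:ℝ) 1, HasDerivAt (fun x => u x - y x) (u' x - y' x) x :=
    fun x hx => (hu x hx).sub (hy x hx)
  have e1 : (fun x => a x * (u' x - y' x) ^ 2) =
      fun x => (a x * u' x ^ 2 - 2 * (a x * (u' x * y' x))) + a x * y' x ^ 2 := by
    ext x; ring
  have hq : IntegrableOn (fun x => a x * u' x ^ 2 - 2 * (a x * (u' x * y' x))) (Ioo 0 1) :=
    hiu.sub (hc.const_mul 2)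
  have hiv : IntegrableOn (fun x => a x * (u' x - y' x) ^ 2) (Ioo 0 1) := by
    rw [e1]
    exact hq.add hiy
  have h1 := ibp ha ha0 hum hw hiw hiu (huc.sub hyc) hv (by simp [hu0, hy0]) (by simp [hu1, hy1])
    hiv
  have h2 : 0 ≤ ∫ x in Ioo (0:ℝ) 1, a x * (u' x - y' x) ^ 2 :=
    integral_nonneg fun x => mul_nonneg (ha0 x) (sq_nonneg _)
  rw [e1, integral_add hq hiy, integral_sub hiu (hc.const_mul 2),
    integral_const_mul] at h2
  have e2 : ∫ x in Ioo (0:ℝ) 1, a x * (u' x * (u' x - y' x)) =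
      (∫ x in Ioo (0:ℝ) 1, a x * u' x ^ 2) - ∫ x in Ioo (0:ℝ) 1, a x * (u' x * y' x) := by
    rw [← integral_sub hiu hc]
    congr 1; ext x; ring
  rw [e2] at h1
  simp only [Pi.sub_apply] at h1
  linarith

lemma poly_approx {a u' : ℝ → ℝ} (ha : Continuous a) (ha0 : ∀ x, 0 ≤ a x)
    (hu : AEStronglyMeasurable u' (volume.restrict (Ioo 0 1)))
    (hiu : IntegrableOn (fun x => a x * u' x ^ 2) (Ioo 0 1)) {ε : ℝ} (hε : 0 < ε) :
    ∃ p : Polynomial ℝ, ∫ x in Ioo (0:ℝ) 1, a x * (u' x - p.eval x) ^ 2 ≤ ε := by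
  obtain ⟨A, hA⟩ := isCompact_Icc.exists_bound_of_continuousOn (ha.continuousOn (s := Icc 0 1))
  have hA0 : 0 ≤ A := (norm_nonneg _).trans (hA 0 (by simp))
  have hai : IntegrableOn a (Ioo 0 1) :=
    (ha.integrableOn_Icc (a := 0) (b := 1)).mono_set Ioo_subset_Icc_self
  set ν := volume.restrict (Ioo (0:ℝ) 1) with hν
  have hdm : AEMeasurable (fun x => ENNReal.ofReal (a x)) ν :=
    ha.measurable.ennreal_ofReal.aemeasurable
  have hdf : ∀ᵐ x ∂ν, ENNReal.ofReal (a x) < ⊤ := Filter.Eventually.of_forall fun x => by simp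
  set μ := ν.withDensity (fun x => ENNReal.ofReal (a x)) with hμ
  have : IsFiniteMeasure μ := isFiniteMeasure_withDensity_ofReal hai.2
  have hum : AEStronglyMeasurable u' μ := hu.mono_ac (withDensity_absolutelyContinuous _ _)
  have conv : ∀ f : ℝ → ℝ, ∫ x, f x ∂μ = ∫ x in Ioo (0:ℝ) 1, a x * f x := by
    intro f
    rw [hμ, integral_withDensity_eq_integral_toReal_smul₀ hdm hdf]
    simp [ENNReal.toReal_ofReal (ha0 _), hν]
  have hL : MemLp u' 2 μ := by
    rw [memLp_two_iff_integrable_sq hum, hμ,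
      integrable_withDensity_iff_integrable_smul₀' hdm hdf]
    have hiu' : Integrable (fun x => a x * u' x ^ 2) (volume.restrict (Ioo 0 1)) := hiu
    simpa [ENNReal.toReal_ofReal (ha0 _), hν] using hiu'
  obtain ⟨g, hg, hgL⟩ := MemLp.exists_boundedContinuous_integral_rpow_sub_le (p := 2) two_pos
    (μ := μ) (f := u') (by simpa using hL) (ε := ε/4) (by linarith)
  set κ := Real.sqrt (ε / (4 * (A + 1))) with hκ
  have hκ0 : 0 < κ := Real.sqrt_pos.2 (by positivity)
  have hκ2 : κ ^ 2 = ε / (4 * (A + 1)) := Real.sq_sqrt (by positivity)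
  obtain ⟨p, hp⟩ := exists_polynomial_near_of_continuousOn 0 1 g g.continuous.continuousOn κ hκ0
  refine ⟨p, ?_⟩
  rw [conv] at hg
  have hg2 : ∫ x in Ioo (0:ℝ) 1, a x * (u' x - g x) ^ 2 ≤ ε / 4 := by
    convert hg using 4 with x
    rw [Real.norm_eq_abs]
    norm_cast
    rw [sq_abs]
  have hgm : AEStronglyMeasurable (fun x => g x) ν := g.continuous.aestronglyMeasurable
  have hig : IntegrableOn (fun x => a x * g x ^ 2) (Ioo 0 1) :=
    ((ha.mul (g.continuous.pow 2)).integrableOn_Icc (a := 0) (b := 1)).mono_set Ioo_subset_Icc_self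
  have hi1 : IntegrableOn (fun x => a x * (u' x - g x) ^ 2) (Ioo 0 1) := by
    have hc := cross_int ha ha0 hu hgm hiu hig
    refine ((hiu.sub (hc.const_mul 2)).add hig).congr (Filter.Eventually.of_forall fun x => ?_)
    simp only [Pi.add_apply, Pi.sub_apply]
    ring
  have hk : IntegrableOn (fun _ : ℝ => 2 * (A * κ ^ 2)) (Ioo 0 1) :=
    integrable_const _
  calc ∫ x in Ioo (0:ℝ) 1, a x * (u' x - p.eval x) ^ 2
      ≤ ∫ x in Ioo (0:ℝ) 1, (2 * (a x * (u' x - g x) ^ 2) + 2 * (A * κ ^ 2)) := by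
        refine integral_mono_of_nonneg ?_ ((hi1.const_mul 2).add hk) ?_
        · exact Filter.Eventually.of_forall fun x => mul_nonneg (ha0 x) (sq_nonneg _)
        · refine (ae_restrict_mem measurableSet_Ioo).mono fun x hx => ?_
          have hx' : x ∈ Icc (0:ℝ) 1 := ⟨hx.1.le, hx.2.le⟩
          have h1 := hp x hx'
          have h2 : a x ≤ A := (le_abs_self _).trans (hA x hx')
          have h3 : (p.eval x - g x) ^ 2 ≤ κ ^ 2 := sq_le_sq' (by linarith [abs_lt.1 h1])
            (abs_lt.1 h1).2.le
          have h4 : a x * (p.eval x - g x) ^ 2 ≤ A * κ ^ 2 := by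
            have := ha0 x
            gcongr
          have h5 : a x * (u' x - p.eval x) ^ 2 ≤
              a x * (2 * (u' x - g x) ^ 2 + 2 * (p.eval x - g x) ^ 2) := by
            refine mul_le_mul_of_nonneg_left ?_ (ha0 x)
            nlinarith [sq_nonneg ((u' x - g x) + (p.eval x - g x))]
          simp only
          nlinarith
    _ = 2 * (∫ x in Ioo (0:ℝ) 1, a x * (u' x - g x) ^ 2) + 2 * (A * κ ^ 2) := by
        rw [integral_add (hi1.const_mul 2) hk, integral_const_mul]
        simp
    _ ≤ ε := by
        have : A * κ ^ 2 ≤ ε / 4 := by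
          rw [hκ2, mul_div_assoc', div_le_div_iff₀ (by positivity) (by positivity)]
          nlinarith
        linarith

/-- Lower semicontinuity of the energy through affine minorants. -/
lemma lsc_minorant {a a' u u' : ℝ → ℝ} (ha : Continuous a) (ha0 : ∀ x, 0 ≤ a x)
    (had : ∀ x ∈ Ioo (0:ℝ) 1, HasDerivAt a (a' x) x) (ha' : ContinuousOn a' (Ioo 0 1))
    (hu : ∀ x ∈ Ioo (0:ℝ) 1, HasDerivAt u (u' x) x) (huc : Continuous u)
    (hiu : IntegrableOn (fun x => a x * u' x ^ 2) (Ioo 0 1)) {ε : ℝ} (hε : 0 < ε) :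
    ∃ (δ c1 c2 c3 : ℝ) (κ : ℝ → ℝ), Continuous κ ∧
      (∀ y y' : ℝ → ℝ, Continuous y → (∀ x ∈ Ioo (0:ℝ) 1, HasDerivAt y (y' x) x) →
        IntegrableOn (fun x => a x * y' x ^ 2) (Ioo 0 1) →
        c1 * y (1 - δ) + c2 * y δ + (∫ x in δ..(1-δ), κ x * y x) + c3 ≤
          ∫ x in Ioo (0:ℝ) 1, a x * y' x ^ 2) ∧
      (∫ x in Ioo (0:ℝ) 1, a x * u' x ^ 2) - ε ≤
        c1 * u (1 - δ) + c2 * u δ + (∫ x in δ..(1-δ), κ x * u x) + c3 := by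
  obtain ⟨p, hp⟩ := poly_approx ha ha0 (meas_deriv1 measurableSet_Ioo hu) hiu (half_pos hε)
  -- choice of δ
  have hmono : Monotone (fun n : ℕ => Icc ((1:ℝ)/((n:ℝ)+3)) (1 - 1/((n:ℝ)+3))) := by
    intro i j hij
    have h1 : (1:ℝ)/((j:ℝ)+3) ≤ 1/((i:ℝ)+3) := by
      have : (i:ℝ) ≤ j := by exact_mod_cast hij
      gcongr
    exact Icc_subset_Icc h1 (by linarith)
  have hU : (⋃ n : ℕ, Icc ((1:ℝ)/((n:ℝ)+3)) (1 - 1/((n:ℝ)+3))) = Ioo 0 1 := by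
    ext x
    simp only [mem_iUnion, mem_Icc, mem_Ioo]
    constructor
    · rintro ⟨n, h1, h2⟩
      have : (0:ℝ) < 1/((n:ℝ)+3) := by positivity
      constructor <;> linarith
    · rintro ⟨h1, h2⟩
      obtain ⟨n, hn⟩ := exists_nat_one_div_lt (lt_min h1 (sub_pos.2 h2))
      refine ⟨n, ?_⟩
      have h3 : (1:ℝ)/((n:ℝ)+3) ≤ 1/((n:ℝ)+1) := by
        gcongr; norm_num
      have h4 := lt_min_iff.1 hn
      constructor <;> linarith
  have hlim := tendsto_setIntegral_of_monotone (μ := volume) (f := fun x => a x * u' x ^ 2)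
    (s := fun n : ℕ => Icc ((1:ℝ)/((n:ℝ)+3)) (1 - 1/((n:ℝ)+3)))
    (fun _ => measurableSet_Icc) hmono (by rw [hU]; exact hiu)
  rw [hU] at hlim
  obtain ⟨n, hn⟩ := ((tendsto_order.1 hlim).1 ((∫ x in Ioo (0:ℝ) 1, a x * u' x ^ 2) - ε/2)
    (by linarith)).exists
  set δ := (1:ℝ)/((n:ℝ)+3) with hδ
  have hδ0 : 0 < δ := by positivity
  have hδ1 : δ ≤ 1 - δ := by
    have : δ ≤ 1/2 := by
      rw [hδ]
      have : (0:ℝ) ≤ n := Nat.cast_nonneg n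
      gcongr; linarith
    linarith
  have hsub : Icc δ (1-δ) ⊆ Ioo 0 1 := fun x hx => ⟨by linarith [hx.1], by linarith [hx.2]⟩
  set ψ : ℝ → ℝ := fun x => p.eval x with hψ
  set ψ' : ℝ → ℝ := fun x => (Polynomial.derivative p).eval x with hψ'
  have hψc : Continuous ψ := p.continuous
  have hψ'c : Continuous ψ' := (Polynomial.derivative p).continuous
  set k : ℝ → ℝ := fun x => a' x * ψ x + a x * ψ' x with hk
  have hkc : ContinuousOn k (Icc δ (1-δ)) :=
    ((ha'.mono hsub).mul hψc.continuousOn).add (ha.continuousOn.mul hψ'c.continuousOn)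
  set κ0 : ℝ → ℝ := fun x => k (max δ (min x (1-δ))) with hκ0
  have hκ0c : Continuous κ0 := by
    refine hkc.comp_continuous (by fun_prop) fun x => ?_
    exact ⟨le_max_left _ _, max_le hδ1 (min_le_right _ _)⟩
  have hκe : ∀ x ∈ Icc δ (1-δ), κ0 x = k x := by
    intro x hx
    simp only [hκ0]
    rw [min_eq_left hx.2, max_eq_right hx.1]
  have hψi : IntegrableOn (fun x => a x * ψ x ^ 2) (Ioo 0 1) :=
    ((ha.mul (hψc.pow 2)).integrableOn_Icc (a := 0) (b := 1)).mono_set Ioo_subset_Icc_self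
  have hmid : ∀ y y' : ℝ → ℝ, Continuous y → (∀ x ∈ Ioo (0:ℝ) 1, HasDerivAt y (y' x) x) →
        IntegrableOn (fun x => a x * y' x ^ 2) (Ioo 0 1) →
        (2 * a (1-δ) * ψ (1-δ)) * y (1 - δ) + (-2 * a δ * ψ δ) * y δ
          + (∫ x in δ..(1-δ), (-2 * κ0 x) * y x) + (- ∫ x in Icc δ (1-δ), a x * ψ x ^ 2) =
          (∫ x in Icc δ (1-δ), a x * y' x ^ 2) -
            ∫ x in Icc δ (1-δ), a x * (y' x - ψ x) ^ 2 := by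
    intro y y' hyc hy hiy
    have hcr := cross_int ha ha0 (meas_deriv1 measurableSet_Ioo hy) hψc.aestronglyMeasurable hiy hψi
    have hcr' := hcr.mono_set hsub
    have hiy' := hiy.mono_set hsub
    have hψi' := hψi.mono_set hsub
    have hky : IntegrableOn (fun x => k x * y x) (Icc δ (1-δ)) :=
      (hkc.mul hyc.continuousOn).integrableOn_Icc
    have hder : ∀ x ∈ uIcc δ (1-δ), HasDerivAt (fun x => a x * ψ x * y x)
        (k x * y x + a x * (y' x * ψ x)) x := by
      intro x hx
      rw [uIcc_of_le hδ1] at hx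
      have := ((had x (hsub hx)).mul (p.hasDerivAt x)).mul (hy x (hsub hx))
      refine this.congr_deriv ?_
      simp only [hk, hψ, hψ', Pi.mul_apply]
      ring
    have hii : IntervalIntegrable (fun x => k x * y x + a x * (y' x * ψ x)) volume δ (1-δ) := by
      rw [intervalIntegrable_iff_integrableOn_Icc_of_le hδ1]
      exact hky.add hcr'
    have hF := intervalIntegral.integral_eq_sub_of_hasDerivAt hder hii
    rw [intervalIntegral.integral_of_le hδ1, ← integral_Icc_eq_integral_Ioc,
      integral_add hky hcr'] at hF
    have e1 : ∫ x in δ..(1-δ), (-2 * κ0 x) * y x = -2 * ∫ x in Icc δ (1-δ), k x * y x := by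
      rw [intervalIntegral.integral_of_le hδ1, ← integral_Icc_eq_integral_Ioc,
        ← integral_const_mul]
      refine setIntegral_congr_fun measurableSet_Icc fun x hx => ?_
      simp only [hκe x hx]
      ring
    have e2 : ∫ x in Icc δ (1-δ), a x * (y' x - ψ x) ^ 2 =
        (∫ x in Icc δ (1-δ), a x * y' x ^ 2) - 2 * (∫ x in Icc δ (1-δ), a x * (y' x * ψ x))
          + ∫ x in Icc δ (1-δ), a x * ψ x ^ 2 := by
      have hq : IntegrableOn (fun x => a x * y' x ^ 2 - 2 * (a x * (y' x * ψ x)))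
        (Icc δ (1-δ)) := hiy'.sub (hcr'.const_mul 2)
      rw [← integral_const_mul, ← integral_sub hiy' (hcr'.const_mul 2), ← integral_add hq hψi']
      congr 1; ext x; ring
    rw [e1, e2]
    linarith
  refine ⟨δ, 2 * a (1-δ) * ψ (1-δ), -2 * a δ * ψ δ, - ∫ x in Icc δ (1-δ), a x * ψ x ^ 2,
    fun x => -2 * κ0 x, by fun_prop, ?_, ?_⟩
  · intro y y' hyc hy hiy
    rw [hmid y y' hyc hy hiy]
    have h1 : (∫ x in Icc δ (1-δ), a x * y' x ^ 2) ≤ ∫ x in Ioo (0:ℝ) 1, a x * y' x ^ 2 :=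
      setIntegral_mono_set hiy (Filter.Eventually.of_forall
        fun x => mul_nonneg (ha0 x) (sq_nonneg _)) hsub.eventuallyLE
    have h2 : 0 ≤ ∫ x in Icc δ (1-δ), a x * (y' x - ψ x) ^ 2 :=
      integral_nonneg fun x => mul_nonneg (ha0 x) (sq_nonneg _)
    linarith
  · rw [hmid u u' huc hu hiu]
    have hdi : IntegrableOn (fun x => a x * (u' x - ψ x) ^ 2) (Ioo 0 1) := by
      have hc := cross_int ha ha0 (meas_deriv1 measurableSet_Ioo hu) hψc.aestronglyMeasurable
        hiu hψi
      refine ((hiu.sub (hc.const_mul 2)).add hψi).congr (Filter.Eventually.of_forall fun x => ?_)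
      simp only [Pi.add_apply, Pi.sub_apply]
      ring
    have h1 : (∫ x in Icc δ (1-δ), a x * (u' x - ψ x) ^ 2) ≤
        ∫ x in Ioo (0:ℝ) 1, a x * (u' x - ψ x) ^ 2 :=
      setIntegral_mono_set hdi (Filter.Eventually.of_forall
        fun x => mul_nonneg (ha0 x) (sq_nonneg _)) hsub.eventuallyLE
    linarith

lemma shift_int {E : ℝ → ℝ} {S η : ℝ} (hη : 0 < η) (hηS : η ≤ S)
    (hE : IntervalIntegrable E volume (-η) S) :
    IntervalIntegrable (fun t => E t - E (t - η)) volume 0 S ∧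
    ∫ t in (0:ℝ)..S, (E t - E (t - η)) = (∫ t in (S-η)..S, E t) - ∫ t in (-η)..0, E t := by
  have sub : ∀ c d : ℝ, -η ≤ c → c ≤ S → -η ≤ d → d ≤ S → IntervalIntegrable E volume c d := by
    intro c d h1 h2 h3 h4
    refine hE.mono_set ?_
    rw [uIcc_of_le (show -η ≤ S by linarith)]
    exact uIcc_subset_Icc ⟨h1, h2⟩ ⟨h3, h4⟩
  have i1 := sub 0 S (by linarith) (by linarith) (by linarith) le_rfl
  have i2 : IntervalIntegrable (fun t => E (t - η)) volume 0 S := by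
    have := (sub (0-η) (S-η) (by linarith) (by linarith) (by linarith) (by linarith)).comp_sub_right η
    simpa using this
  refine ⟨i1.sub i2, ?_⟩
  rw [intervalIntegral.integral_sub i1 i2, intervalIntegral.integral_comp_sub_right]
  have j1 := intervalIntegral.integral_add_adjacent_intervals
    (sub 0 (S-η) (by linarith) (by linarith) (by linarith) (by linarith))
    (sub (S-η) S (by linarith) (by linarith) (by linarith) (by linarith))
  have j2 := intervalIntegral.integral_add_adjacent_intervals
    (sub (-η) 0 (by linarith) (by linarith) (by linarith) (by linarith))
    (sub 0 (S-η) (by linarith) (by linarith) (by linarith) (by linarith))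
  rw [zero_sub]
  linarith

lemma cs_interval {g : ℝ → ℝ} {s t : ℝ} (hst : s < t) (hg : IntervalIntegrable g volume s t)
    (hg2 : IntervalIntegrable (fun x => g x ^ 2) volume s t) :
    (∫ x in s..t, g x) ^ 2 ≤ (t - s) * ∫ x in s..t, g x ^ 2 := by
  set J := ∫ x in s..t, g x
  set c := J / (t - s) with hc
  have h0 : 0 ≤ ∫ x in s..t, (g x - c) ^ 2 :=
    intervalIntegral.integral_nonneg hst.le fun x _ => sq_nonneg _
  have e : ∫ x in s..t, (g x - c) ^ 2 = (∫ x in s..t, g x ^ 2) - 2 * c * J + (t - s) * c ^ 2 := by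
    have : (fun x => (g x - c) ^ 2) = fun x => (g x ^ 2 - (2 * c) * g x) + c ^ 2 := by
      ext x; ring
    rw [this, intervalIntegral.integral_add (hg2.sub (hg.const_mul _)) (by simp),
      intervalIntegral.integral_sub hg2 (hg.const_mul _), intervalIntegral.integral_const_mul]
    simp [J]
  have hp : 0 < t - s := sub_pos.2 hst
  have hJ : c * (t - s) = J := by rw [hc]; field_simp
  rw [e] at h0
  have : 0 ≤ (t - s) * ((∫ x in s..t, g x ^ 2) - 2 * c * J + (t - s) * c ^ 2) :=
    mul_nonneg hp.le h0
  have e2 : (t - s) * ((∫ x in s..t, g x ^ 2) - 2 * c * J + (t - s) * c ^ 2) =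
    (t - s) * (∫ x in s..t, g x ^ 2) - J ^ 2 := by
    rw [← hJ]; ring
  linarith

lemma diff_bound {f f' : ℝ → ℝ} {S η : ℝ} (hη : 0 < η) (hηS : η ≤ S) (hf : Continuous f)
    (hf0 : ∀ t ≤ 0, f t = f 0) (hd : ∀ t ∈ Ioo (0:ℝ) S, HasDerivAt f (f' t) t)
    (hi : IntegrableOn (fun t => f' t ^ 2) (Ioo 0 S)) :
    ∫ t in Ioo (0:ℝ) S, (f t - f (t - η)) ^ 2 ≤ η ^ 2 * ∫ t in Ioo (0:ℝ) S, f' t ^ 2 := by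
  have hS : 0 < S := by linarith
  have hm := meas_deriv1 measurableSet_Ioo hd
  have hL : MemLp f' 2 (volume.restrict (Ioo 0 S)) := (memLp_two_iff_integrable_sq hm).2 hi
  have hi1 : IntegrableOn f' (Ioo 0 S) := hL.integrable (by norm_num)
  set F : ℝ → ℝ := (Ioo 0 S).indicator (fun t => f' t ^ 2) with hF
  have hFi : Integrable F := (integrable_indicator_iff measurableSet_Ioo).2 hi
  have hF0 : ∀ t, 0 ≤ F t := fun t => indicator_nonneg (fun _ _ => sq_nonneg _) t
  set H : ℝ → ℝ := fun t => ∫ s in (0:ℝ)..t, F s with hH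
  have hHc : Continuous H := intervalIntegral.continuous_primitive
    (fun a b => hFi.intervalIntegrable) 0
  have hdiff : ∀ s t, H t - H s = ∫ r in s..t, F r := fun s t =>
    intervalIntegral.integral_interval_sub_left hFi.intervalIntegrable hFi.intervalIntegrable
  have hHm : ∀ s t, s ≤ t → H s ≤ H t := by
    intro s t hst
    have := intervalIntegral.integral_nonneg (μ := volume) hst (fun r _ => hF0 r)
    linarith [hdiff s t]
  have hHneg : ∀ t ≤ 0, H t = 0 := by
    intro t ht
    have : ∫ r in t..0, F r = ∫ r in t..0, (0:ℝ) := by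
      refine intervalIntegral.integral_congr fun r hr => ?_
      rw [uIcc_of_le ht] at hr
      exact indicator_of_notMem (fun h => by linarith [h.1, hr.2]) _
    simp only [hH]
    rw [intervalIntegral.integral_symm, this]
    simp
  have hHS : H S = ∫ t in Ioo (0:ℝ) S, f' t ^ 2 := by
    simp only [hH]
    rw [intervalIntegral.integral_of_le hS.le, integral_Ioc_eq_integral_Ioo, hF,
      setIntegral_indicator measurableSet_Ioo, inter_self]
  have hpt : ∀ t ∈ Ioo (0:ℝ) S, (f t - f (t - η)) ^ 2 ≤ η * (H t - H (t - η)) := by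
    intro t ht
    set s := max (t - η) 0 with hs
    have hst : s < t := max_lt (by linarith) ht.1
    have hs0 : 0 ≤ s := le_max_right _ _
    have e1 : f (t - η) = f s := by
      rcases le_total (t - η) 0 with h | h
      · rw [hs, max_eq_right h, hf0 _ h]
      · rw [hs, max_eq_left h]
    have e2 : H (t - η) = H s := by
      rcases le_total (t - η) 0 with h | h
      · rw [hs, max_eq_right h, hHneg _ h, hHneg _ le_rfl]
      · rw [hs, max_eq_left h]
    have hsub : Ioo s t ⊆ Ioo 0 S := Ioo_subset_Ioo hs0 ht.2.le
    have i1 : IntervalIntegrable f' volume s t :=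
      (intervalIntegrable_iff_integrableOn_Ioo_of_le hst.le).2 (hi1.mono_set hsub)
    have i2 : IntervalIntegrable (fun x => f' x ^ 2) volume s t :=
      (intervalIntegrable_iff_integrableOn_Ioo_of_le hst.le).2 (hi.mono_set hsub)
    have e3 := intervalIntegral.integral_eq_sub_of_hasDerivAt_of_le hst.le hf.continuousOn
      (fun x hx => hd x (hsub hx)) i1
    have e4 := cs_interval hst i1 i2
    have e5 : ∫ x in s..t, f' x ^ 2 = H t - H s := by
      rw [hdiff, intervalIntegral.integral_of_le hst.le, intervalIntegral.integral_of_le hst.le,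
        integral_Ioc_eq_integral_Ioo, integral_Ioc_eq_integral_Ioo]
      refine setIntegral_congr_fun measurableSet_Ioo fun x hx => ?_
      exact (indicator_of_mem (hsub hx) (fun t => f' t ^ 2)).symm
    rw [e3, e5] at e4
    rw [e1, e2]
    refine e4.trans (mul_le_mul_of_nonneg_right ?_ (by linarith [hHm s t hst.le]))
    have : t - η ≤ s := le_max_left _ _
    linarith
  obtain ⟨hsi, hsh⟩ := shift_int hη hηS (hHc.intervalIntegrable (-η) S)
  have hz : ∫ t in (-η)..0, H t = 0 := by
    have : ∫ t in (-η)..0, H t = ∫ t in (-η)..0, (0:ℝ) := by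
      refine intervalIntegral.integral_congr fun r hr => ?_
      rw [uIcc_of_le (by linarith)] at hr
      exact hHneg r hr.2
    rw [this]; simp
  have hle : ∫ t in (S-η)..S, H t ≤ η * H S := by
    have := intervalIntegral.integral_mono_on (show S - η ≤ S by linarith)
      (hHc.intervalIntegrable (μ := volume) (S-η) S) (intervalIntegrable_const (c := H S))
      (fun x hx => hHm x S hx.2)
    simpa using this
  calc ∫ t in Ioo (0:ℝ) S, (f t - f (t - η)) ^ 2
      = ∫ t in (0:ℝ)..S, (f t - f (t - η)) ^ 2 := by
        rw [intervalIntegral.integral_of_le hS.le, integral_Ioc_eq_integral_Ioo]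
    _ ≤ ∫ t in (0:ℝ)..S, η * (H t - H (t - η)) := by
        refine intervalIntegral.integral_mono_on_of_le_Ioo hS.le ?_ (hsi.const_mul η) hpt
        exact (by fun_prop : Continuous fun t => (f t - f (t - η)) ^ 2).intervalIntegrable _ _
    _ ≤ η ^ 2 * ∫ t in Ioo (0:ℝ) S, f' t ^ 2 := by
        rw [intervalIntegral.integral_const_mul, hsh, hz, ← hHS, sub_zero, sq, mul_assoc]
        exact mul_le_mul_of_nonneg_left hle hη.le

/-- The regularity package used for the unweighted energy (in)equalities. -/
structure Cls (S : ℝ) (a a' : ℝ → ℝ) (z zx zt w : ℝ → ℝ → ℝ) : Prop where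
  hS : 0 < S
  ha : Continuous a
  ha0 : ∀ x, 0 ≤ a x
  had : ∀ x ∈ Ioo (0:ℝ) 1, HasDerivAt a (a' x) x
  ha' : ContinuousOn a' (Ioo 0 1)
  hz : Continuous (fun p : ℝ × ℝ => z p.1 p.2)
  hzneg : ∀ x, ∀ t ≤ 0, z x t = z x 0
  hzx : ∀ x ∈ Ioo (0:ℝ) 1, ∀ t ∈ Icc (0:ℝ) S, HasDerivAt (fun y => z y t) (zx x t) x
  hw : ∀ x ∈ Ioo (0:ℝ) 1, ∀ t ∈ Ioo (0:ℝ) S, HasDerivAt (fun y => a y * zx y t) (w x t) x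
  hzt : ∀ x ∈ Ioo (0:ℝ) 1, ∀ t ∈ Ioo (0:ℝ) S, HasDerivAt (fun u => z x u) (zt x t) t
  hbc : ∀ t ∈ Icc (0:ℝ) S, z 0 t = 0 ∧ z 1 t = 0
  hiw : IntegrableOn (fun p : ℝ × ℝ => w p.1 p.2 ^ 2) (Ioo 0 1 ×ˢ Ioo 0 S)
  hizt : IntegrableOn (fun p : ℝ × ℝ => zt p.1 p.2 ^ 2) (Ioo 0 1 ×ˢ Ioo 0 S)
  hie : ∀ t ∈ Icc (0:ℝ) S, IntegrableOn (fun x => a x * zx x t ^ 2) (Ioo 0 1)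

lemma meas_all {S : ℝ} {a : ℝ → ℝ} {z zx zt w : ℝ → ℝ → ℝ} (ha : Continuous a)
    (hz : Continuous (fun p : ℝ × ℝ => z p.1 p.2))
    (hzx : ∀ x ∈ Ioo (0:ℝ) 1, ∀ t ∈ Ioo (0:ℝ) S, HasDerivAt (fun y => z y t) (zx x t) x)
    (hw : ∀ x ∈ Ioo (0:ℝ) 1, ∀ t ∈ Ioo (0:ℝ) S, HasDerivAt (fun y => a y * zx y t) (w x t) x)
    (hzt : ∀ x ∈ Ioo (0:ℝ) 1, ∀ t ∈ Ioo (0:ℝ) S, HasDerivAt (fun u => z x u) (zt x t) t) :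
    AEStronglyMeasurable (fun p : ℝ × ℝ => zx p.1 p.2)
      (volume.restrict (Ioo (0:ℝ) 1 ×ˢ Ioo (0:ℝ) S)) ∧
    AEStronglyMeasurable (fun p : ℝ × ℝ => w p.1 p.2)
      (volume.restrict (Ioo (0:ℝ) 1 ×ˢ Ioo (0:ℝ) S)) ∧
    AEStronglyMeasurable (fun p : ℝ × ℝ => zt p.1 p.2)
      (volume.restrict (Ioo (0:ℝ) 1 ×ˢ Ioo (0:ℝ) S)) := by
  have hQ : MeasurableSet (Ioo (0:ℝ) 1 ×ˢ Ioo (0:ℝ) S) := measurableSet_Ioo.prod measurableSet_Ioo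
  have mzx : Measurable ((Ioo (0:ℝ) 1 ×ˢ Ioo (0:ℝ) S).indicator
      (fun p : ℝ × ℝ => zx p.1 p.2)) := by
    refine meas_dir hz.measurable hQ (1, 0) fun q hq => ?_
    have h := hzx q.1 hq.1 q.2 hq.2
    have h2 : HasDerivAt (fun u : ℝ => z (q.1 + u) q.2) (zx q.1 q.2) 0 := by
      have := HasDerivAt.comp_const_add (f := fun y => z y q.2) (a := q.1) (x := (0:ℝ))
        (f' := zx q.1 q.2) (by simpa using h)
      exact this
    simpa using h2
  have mzt : Measurable ((Ioo (0:ℝ) 1 ×ˢ Ioo (0:ℝ) S).indicator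
      (fun p : ℝ × ℝ => zt p.1 p.2)) := by
    refine meas_dir hz.measurable hQ (0, 1) fun q hq => ?_
    have h := hzt q.1 hq.1 q.2 hq.2
    have h2 : HasDerivAt (fun u : ℝ => z q.1 (q.2 + u)) (zt q.1 q.2) 0 := by
      have := HasDerivAt.comp_const_add (f := fun y => z q.1 y) (a := q.2) (x := (0:ℝ))
        (f' := zt q.1 q.2) (by simpa using h)
      exact this
    simpa using h2
  have mp : Measurable (fun p : ℝ × ℝ => a p.1 * (Ioo (0:ℝ) 1 ×ˢ Ioo (0:ℝ) S).indicator
      (fun p : ℝ × ℝ => zx p.1 p.2) p) :=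
    (ha.measurable.comp measurable_fst).mul mzx
  have mw : Measurable ((Ioo (0:ℝ) 1 ×ˢ Ioo (0:ℝ) S).indicator
      (fun p : ℝ × ℝ => w p.1 p.2)) := by
    refine meas_dir mp hQ (1, 0) fun q hq => ?_
    have h := hw q.1 hq.1 q.2 hq.2
    have h2 : HasDerivAt (fun u : ℝ => a (q.1 + u) * zx (q.1 + u) q.2) (w q.1 q.2) 0 := by
      have := HasDerivAt.comp_const_add (f := fun y => a y * zx y q.2) (a := q.1) (x := (0:ℝ))
        (f' := w q.1 q.2) (by simpa using h)
      exact this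
    refine h2.congr_of_eventuallyEq ?_
    have hev : ∀ᶠ u : ℝ in nhds 0, q.1 + u ∈ Ioo (0:ℝ) 1 := by
      have hc : ContinuousAt (fun u : ℝ => q.1 + u) 0 := by fun_prop
      refine hc.eventually_mem ?_
      simp only [add_zero]
      exact Ioo_mem_nhds hq.1.1 hq.1.2
    filter_upwards [hev] with u hu
    have hmem : q + u • ((1:ℝ), (0:ℝ)) ∈ Ioo (0:ℝ) 1 ×ˢ Ioo (0:ℝ) S := by
      refine ⟨by simpa using hu, by simpa using hq.2⟩
    rw [indicator_of_mem hmem]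
    simp
  exact ⟨(aestronglyMeasurable_indicator_iff hQ).1 mzx.aestronglyMeasurable,
    (aestronglyMeasurable_indicator_iff hQ).1 mw.aestronglyMeasurable,
    (aestronglyMeasurable_indicator_iff hQ).1 mzt.aestronglyMeasurable⟩

namespace Cls
variable {S : ℝ} {a a' : ℝ → ℝ} {z zx zt w : ℝ → ℝ → ℝ}

lemma meas (h : Cls S a a' z zx zt w) :
    AEStronglyMeasurable (fun p : ℝ × ℝ => zx p.1 p.2)
      (volume.restrict (Ioo (0:ℝ) 1 ×ˢ Ioo (0:ℝ) S)) ∧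
    AEStronglyMeasurable (fun p : ℝ × ℝ => w p.1 p.2)
      (volume.restrict (Ioo (0:ℝ) 1 ×ˢ Ioo (0:ℝ) S)) ∧
    AEStronglyMeasurable (fun p : ℝ × ℝ => zt p.1 p.2)
      (volume.restrict (Ioo (0:ℝ) 1 ×ˢ Ioo (0:ℝ) S)) :=
  meas_all (S := S) h.ha h.hz (fun x hx t ht => h.hzx x hx t ⟨ht.1.le, ht.2.le⟩) h.hw h.hzt

lemma prodEq : (volume : Measure (ℝ × ℝ)).restrict (Ioo (0:ℝ) 1 ×ˢ Ioo (0:ℝ) S) =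
    (volume.restrict (Ioo (0:ℝ) 1)).prod (volume.restrict (Ioo (0:ℝ) S)) := by
  rw [Measure.prod_restrict]; rfl

lemma finQ : IsFiniteMeasure ((volume : Measure (ℝ × ℝ)).restrict
    (Ioo (0:ℝ) 1 ×ˢ Ioo (0:ℝ) S)) := by
  rw [prodEq]; infer_instance

lemma w_int (h : Cls S a a' z zx zt w) :
    IntegrableOn (fun p : ℝ × ℝ => w p.1 p.2) (Ioo 0 1 ×ˢ Ioo 0 S) := by
  have := finQ (S := S)
  exact ((memLp_two_iff_integrable_sq h.meas.2.1).2 h.hiw).integrable (by norm_num)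

lemma mul_bdd_int (h : Cls S a a' z zx zt w) {y : ℝ × ℝ → ℝ} (hy : Continuous y) :
    IntegrableOn (fun p : ℝ × ℝ => w p.1 p.2 * y p) (Ioo 0 1 ×ˢ Ioo 0 S) := by
  obtain ⟨B, hB⟩ := (isCompact_Icc.prod isCompact_Icc).exists_bound_of_continuousOn
    (hy.continuousOn (s := Icc (0:ℝ) 1 ×ˢ Icc (0:ℝ) S))
  refine Integrable.mul_bdd (c := B) h.w_int hy.aestronglyMeasurable ?_
  refine (ae_restrict_mem (measurableSet_Ioo.prod measurableSet_Ioo)).mono fun x hx => hB x ?_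
  exact ⟨⟨hx.1.1.le, hx.1.2.le⟩, ⟨hx.2.1.le, hx.2.2.le⟩⟩

lemma w_slice (h : Cls S a a' z zx zt w) :
    ∀ᵐ t ∂(volume.restrict (Ioo (0:ℝ) S)), IntegrableOn (fun x => w x t) (Ioo 0 1) := by
  have h1 := h.w_int
  rw [IntegrableOn, prodEq] at h1
  exact h1.prod_left_ae

lemma slice_cont (h : Cls S a a' z zx zt w) (t : ℝ) : Continuous (fun x => z x t) :=
  h.hz.comp (Continuous.prodMk_left t)

lemma slice_cont' (h : Cls S a a' z zx zt w) (x : ℝ) : Continuous (fun t => z x t) :=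
  h.hz.comp (Continuous.prodMk_right x)

lemma slice_id (h : Cls S a a' z zx zt w) :
    ∀ᵐ t ∂(volume.restrict (Ioo (0:ℝ) S)),
      ∫ x in Ioo (0:ℝ) 1, a x * zx x t ^ 2 = - ∫ x in Ioo (0:ℝ) 1, w x t * z x t := by
  filter_upwards [h.w_slice, ae_restrict_mem measurableSet_Ioo] with t hwt ht
  have ht' : t ∈ Icc (0:ℝ) S := ⟨ht.1.le, ht.2.le⟩
  have hu := fun x hx => h.hzx x hx t ht'
  have := ibp h.ha h.ha0 (meas_deriv1 measurableSet_Ioo hu) (fun x hx => h.hw x hx t ht) hwt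
    (h.hie t ht') (h.slice_cont t) hu (h.hbc t ht').1 (h.hbc t ht').2 (h.hie t ht')
  rw [← this]
  congr 1; ext x; ring

lemma e_int (h : Cls S a a' z zx zt w) :
    IntegrableOn (fun t => ∫ x in Ioo (0:ℝ) 1, a x * zx x t ^ 2) (Ioo 0 S) := by
  have h1 := h.mul_bdd_int h.hz
  rw [IntegrableOn, prodEq] at h1
  refine h1.integral_prod_right.neg.congr ?_
  filter_upwards [h.slice_id] with t ht
  rw [ht]; rfl

/-- joint integrability of `a zx²` and the identity `∫∫ a zx² = -∫∫ z w`. -/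
lemma energy_id (h : Cls S a a' z zx zt w) :
    IntegrableOn (fun p : ℝ × ℝ => a p.1 * zx p.1 p.2 ^ 2) (Ioo 0 1 ×ˢ Ioo 0 S) ∧
    ∫ p in Ioo (0:ℝ) 1 ×ˢ Ioo (0:ℝ) S, a p.1 * zx p.1 p.2 ^ 2 =
      - ∫ p in Ioo (0:ℝ) 1 ×ˢ Ioo (0:ℝ) S, w p.1 p.2 * z p.1 p.2 := by
  have hm : AEStronglyMeasurable (fun p : ℝ × ℝ => a p.1 * zx p.1 p.2 ^ 2)
      (volume.restrict (Ioo (0:ℝ) 1 ×ˢ Ioo (0:ℝ) S)) :=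
    (h.ha.comp continuous_fst).aestronglyMeasurable.mul (h.meas.1.pow 2)
  have h1 := h.mul_bdd_int h.hz
  rw [IntegrableOn, prodEq] at h1
  rw [prodEq] at hm
  have hI : Integrable (fun p : ℝ × ℝ => a p.1 * zx p.1 p.2 ^ 2)
      ((volume.restrict (Ioo (0:ℝ) 1)).prod (volume.restrict (Ioo (0:ℝ) S))) := by
    rw [integrable_prod_iff' hm]
    constructor
    · filter_upwards [ae_restrict_mem measurableSet_Ioo] with t ht
      exact h.hie t ⟨ht.1.le, ht.2.le⟩
    · refine h.e_int.congr (Filter.Eventually.of_forall fun t => ?_)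
      simp only
      congr 1; ext x
      rw [Real.norm_of_nonneg (mul_nonneg (h.ha0 x) (sq_nonneg _))]
  refine ⟨by rw [IntegrableOn, prodEq]; exact hI, ?_⟩
  rw [prodEq, integral_prod_symm _ hI, integral_prod_symm _ h1, ← integral_neg]
  exact integral_congr_ae h.slice_id

lemma lsc (h : Cls S a a' z zx zt w) {ε : ℝ} (hε : 0 < ε) :
    ∃ η₀ > 0, ∀ t ∈ Icc (0:ℝ) S, S - η₀ < t →
      (∫ x in Ioo (0:ℝ) 1, a x * zx x S ^ 2) - ε ≤ ∫ x in Ioo (0:ℝ) 1, a x * zx x t ^ 2 := by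
  have hSm : S ∈ Icc (0:ℝ) S := ⟨h.hS.le, le_rfl⟩
  obtain ⟨δ, c1, c2, c3, κ, hκ, hL, hu⟩ := lsc_minorant h.ha h.ha0 h.had h.ha'
    (fun x hx => h.hzx x hx S hSm) (h.slice_cont S) (h.hie S hSm) (half_pos hε)
  have hc : Continuous (fun t => c1 * z (1-δ) t + c2 * z δ t + (∫ x in δ..(1-δ), κ x * z x t)
      + c3) := by
    have h1 := h.slice_cont' (1-δ)
    have h2 := h.slice_cont' δ
    have h3 : Continuous (fun t => ∫ x in δ..(1-δ), κ x * z x t) := by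
      refine intervalIntegral.continuous_parametric_intervalIntegral_of_continuous'
        (f := fun t x => κ x * z x t) ?_ _ _
      exact (hκ.comp continuous_snd).mul (h.hz.comp continuous_swap)
    fun_prop
  obtain ⟨η₀, hη₀, hb⟩ := Metric.continuous_iff.1 hc S (ε/2) (half_pos hε)
  refine ⟨η₀, hη₀, fun t ht htS => ?_⟩
  have h1 := hb t (by rw [Real.dist_eq, abs_lt]; constructor <;> linarith [ht.2])
  rw [Real.dist_eq, abs_lt] at h1
  have h2 := hL _ _ (h.slice_cont t) (fun x hx => h.hzx x hx t ht) (h.hie t ht)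
  linarith [h1.1]

/-- Difference version. -/
lemma diff_ineq (h : Cls S a a' z zx zt w) {η : ℝ} (hη : 0 < η) (hηS : η ≤ S) :
    (∫ t in (S-η)..S, ∫ x in Ioo (0:ℝ) 1, a x * zx x t ^ 2)
      - η * (∫ x in Ioo (0:ℝ) 1, a x * zx x 0 ^ 2) ≤
    -2 * ∫ p in Ioo (0:ℝ) 1 ×ˢ Ioo (0:ℝ) S,
        w p.1 p.2 * (z p.1 p.2 - z p.1 (p.2 - η)) := by
  set e : ℝ → ℝ := fun t => ∫ x in Ioo (0:ℝ) 1, a x * zx x t ^ 2 with he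
  set E : ℝ → ℝ := fun t => e (max t 0) with hE
  have hS := h.hS
  have hEpos : ∀ t, 0 ≤ t → E t = e t := fun t ht => by simp only [hE, max_eq_left ht]
  have hEneg : ∀ t, t ≤ 0 → E t = e 0 := fun t ht => by simp only [hE, max_eq_right ht]
  have iE1 : IntervalIntegrable E volume (-η) 0 := by
    refine (intervalIntegrable_const (c := e 0)).congr ?_
    intro t ht
    rw [uIoc_of_le (by linarith)] at ht
    exact (hEneg t ht.2).symm
  have iE2 : IntervalIntegrable E volume 0 S := by
    have h1 : IntervalIntegrable e volume 0 S :=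
      (intervalIntegrable_iff_integrableOn_Ioo_of_le hS.le).2 h.e_int
    refine h1.congr ?_
    intro t ht
    rw [uIoc_of_le hS.le] at ht
    exact (hEpos t ht.1.le).symm
  obtain ⟨hsi, hsh⟩ := shift_int hη hηS (iE1.trans iE2)
  have e1 : ∫ t in (-η)..0, E t = η * e 0 := by
    rw [intervalIntegral.integral_congr (g := fun _ => e 0)]
    · simp
    · intro t ht
      rw [uIcc_of_le (by linarith)] at ht
      exact hEneg t ht.2
  have e2 : ∫ t in (S-η)..S, E t = ∫ t in (S-η)..S, e t := by
    refine intervalIntegral.integral_congr fun t ht => ?_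
    rw [uIcc_of_le (by linarith)] at ht
    exact hEpos t (by linarith [ht.1])
  have hyc : Continuous (fun p : ℝ × ℝ => z p.1 p.2 - z p.1 (p.2 - η)) := by
    refine h.hz.sub ?_
    exact h.hz.comp (f := fun p : ℝ × ℝ => (p.1, p.2 - η)) (by fun_prop)
  have hI := h.mul_bdd_int hyc
  rw [IntegrableOn, prodEq] at hI
  change (∫ t in (S-η)..S, e t) - η * e 0 ≤ _
  rw [← e1, ← e2, ← hsh, prodEq, integral_prod_symm _ hI, ← integral_const_mul,
    intervalIntegral.integral_of_le hS.le, integral_Ioc_eq_integral_Ioo]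
  rw [intervalIntegrable_iff_integrableOn_Ioo_of_le hS.le] at hsi
  refine integral_mono_ae hsi (hI.integral_prod_right.const_mul (-2)) ?_
  filter_upwards [h.w_slice, ae_restrict_mem measurableSet_Ioo] with t hwt ht
  have ht' : t ∈ Icc (0:ℝ) S := ⟨ht.1.le, ht.2.le⟩
  have hs' : max (t - η) 0 ∈ Icc (0:ℝ) S := ⟨le_max_right _ _, max_le (by linarith [ht.2]) hS.le⟩
  have hzs : ∀ x, z x (t - η) = z x (max (t - η) 0) := by
    intro x
    rcases le_total (t - η) 0 with hh | hh
    · rw [max_eq_right hh, h.hzneg x _ hh]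
    · rw [max_eq_left hh]
  have key := subgrad h.ha h.ha0 (fun x hx => h.hw x hx t ht) hwt (h.slice_cont t)
    (fun x hx => h.hzx x hx t ht') (h.hbc t ht').1 (h.hbc t ht').2 (h.hie t ht')
    (h.slice_cont _) (fun x hx => h.hzx x hx _ hs') (h.hbc _ hs').1 (h.hbc _ hs').2 (h.hie _ hs')
  simp only [hzs]
  rw [hEpos t ht.1.le]
  exact key

lemma quot_bound (h : Cls S a a' z zx zt w) {η : ℝ} (hη : 0 < η) (hηS : η ≤ S) :
    ∫ p in Ioo (0:ℝ) 1 ×ˢ Ioo (0:ℝ) S, (η⁻¹ * (z p.1 p.2 - z p.1 (p.2 - η))) ^ 2 ≤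
    ∫ p in Ioo (0:ℝ) 1 ×ˢ Ioo (0:ℝ) S, zt p.1 p.2 ^ 2 := by
  have hyc : Continuous (fun p : ℝ × ℝ => (η⁻¹ * (z p.1 p.2 - z p.1 (p.2 - η))) ^ 2) := by
    have : Continuous (fun p : ℝ × ℝ => z p.1 (p.2 - η)) :=
      h.hz.comp (f := fun p : ℝ × ℝ => (p.1, p.2 - η)) (by fun_prop)
    have := h.hz
    fun_prop
  have hI : IntegrableOn (fun p : ℝ × ℝ => (η⁻¹ * (z p.1 p.2 - z p.1 (p.2 - η))) ^ 2)
      (Ioo (0:ℝ) 1 ×ˢ Ioo (0:ℝ) S) :=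
    (hyc.continuousOn.integrableOn_compact (isCompact_Icc.prod isCompact_Icc)).mono_set
      (prod_mono Ioo_subset_Icc_self Ioo_subset_Icc_self)
  have hJ := h.hizt
  rw [IntegrableOn, prodEq] at hI hJ
  rw [prodEq, integral_prod _ hI, integral_prod _ hJ]
  refine integral_mono_ae hI.integral_prod_left hJ.integral_prod_left ?_
  filter_upwards [hJ.prod_right_ae, ae_restrict_mem measurableSet_Ioo] with x hx hx'
  have key := diff_bound hη hηS (h.slice_cont' x) (h.hzneg x) (h.hzt x hx') hx
  simp only [mul_pow]
  rw [integral_const_mul]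
  have e : (η⁻¹) ^ 2 * (η ^ 2 * ∫ t in Ioo (0:ℝ) S, zt x t ^ 2) = ∫ t in Ioo (0:ℝ) S, zt x t ^ 2 := by
    field_simp
  rw [← e]
  gcongr

end Cls

lemma fatou_real {α : Type*} [MeasurableSpace α] {μ : Measure α} {f : ℕ → α → ℝ} {g : α → ℝ}
    {K : ℝ} (hf : ∀ n, Integrable (f n) μ) (hf0 : ∀ n x, 0 ≤ f n x) (hg : Integrable g μ)
    (hg0 : ∀ x, 0 ≤ g x)
    (hlim : ∀ᵐ x ∂μ, Filter.Tendsto (fun n => f n x) Filter.atTop (nhds (g x)))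
    (hK : ∀ᶠ n in Filter.atTop, ∫ x, f n x ∂μ ≤ K) : ∫ x, g x ∂μ ≤ K := by
  have hK0 : 0 ≤ K := by
    obtain ⟨n, hn⟩ := hK.exists
    exact (integral_nonneg (hf0 n)).trans hn
  rw [← ENNReal.ofReal_le_ofReal_iff hK0,
    ofReal_integral_eq_lintegral_ofReal hg (Filter.Eventually.of_forall hg0)]
  calc ∫⁻ x, ENNReal.ofReal (g x) ∂μ
      = ∫⁻ x, Filter.liminf (fun n => ENNReal.ofReal (f n x)) Filter.atTop ∂μ := by
        refine lintegral_congr_ae ?_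
        filter_upwards [hlim] with x hx
        exact ((ENNReal.continuous_ofReal.tendsto _).comp hx).liminf_eq.symm
    _ ≤ Filter.liminf (fun n => ∫⁻ x, ENNReal.ofReal (f n x) ∂μ) Filter.atTop :=
        lintegral_liminf_le' fun n => (hf n).1.aemeasurable.ennreal_ofReal
    _ ≤ ENNReal.ofReal K := by
        refine Filter.liminf_le_of_frequently_le' (hK.mono fun n hn => ?_).frequently
        rw [← ofReal_integral_eq_lintegral_ofReal (hf n) (Filter.Eventually.of_forall (hf0 n))]
        exact ENNReal.ofReal_le_ofReal hn

namespace Cls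
variable {S : ℝ} {a a' : ℝ → ℝ} {z zx zt w : ℝ → ℝ → ℝ}

lemma wzt_int (h : Cls S a a' z zx zt w) :
    IntegrableOn (fun p : ℝ × ℝ => w p.1 p.2 * zt p.1 p.2) (Ioo 0 1 ×ˢ Ioo 0 S) := by
  refine MemLp.integrable_mul (p := 2) (q := 2) ?_ ?_
  · exact (memLp_two_iff_integrable_sq h.meas.2.1).2 h.hiw
  · exact (memLp_two_iff_integrable_sq h.meas.2.2).2 h.hizt

/-- The unweighted energy inequality. -/
lemma energy_ineq (h : Cls S a a' z zx zt w) :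
    (∫ x in Ioo (0:ℝ) 1, a x * zx x S ^ 2) ≤ (∫ x in Ioo (0:ℝ) 1, a x * zx x 0 ^ 2)
      - 2 * ∫ p in Ioo (0:ℝ) 1 ×ˢ Ioo (0:ℝ) S, w p.1 p.2 * zt p.1 p.2 := by
  set e : ℝ → ℝ := fun t => ∫ x in Ioo (0:ℝ) 1, a x * zx x t ^ 2 with he
  have hS := h.hS
  set Q := Ioo (0:ℝ) 1 ×ˢ Ioo (0:ℝ) S with hQ
  have hQm : MeasurableSet Q := measurableSet_Ioo.prod measurableSet_Ioo
  set D : ℝ → ℝ × ℝ → ℝ := fun η p => η⁻¹ * (z p.1 p.2 - z p.1 (p.2 - η)) with hD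
  have hDc : ∀ η, Continuous (D η) := by
    intro η
    have : Continuous (fun p : ℝ × ℝ => z p.1 (p.2 - η)) :=
      h.hz.comp (f := fun p : ℝ × ℝ => (p.1, p.2 - η)) (by fun_prop)
    have := h.hz
    fun_prop
  have hD2 : ∀ η, IntegrableOn (fun p => D η p ^ 2) Q := fun η =>
    (((hDc η).pow 2).continuousOn.integrableOn_compact (isCompact_Icc.prod isCompact_Icc)).mono_set
      (prod_mono Ioo_subset_Icc_self Ioo_subset_Icc_self)
  have hwD : ∀ η, IntegrableOn (fun p : ℝ × ℝ => w p.1 p.2 * D η p) Q := fun η =>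
    h.mul_bdd_int (hDc η)
  have sqexp : ∀ y : ℝ × ℝ → ℝ, IntegrableOn (fun p : ℝ × ℝ => w p.1 p.2 * y p) Q →
      IntegrableOn (fun p => y p ^ 2) Q →
      IntegrableOn (fun p : ℝ × ℝ => (w p.1 p.2 + y p) ^ 2) Q ∧
      ∫ p in Q, (w p.1 p.2 + y p) ^ 2 = (∫ p in Q, w p.1 p.2 ^ 2)
        + 2 * (∫ p in Q, w p.1 p.2 * y p) + ∫ p in Q, y p ^ 2 := by
    intro y h1 h2
    have e1 : (fun p : ℝ × ℝ => (w p.1 p.2 + y p) ^ 2) =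
        fun p => (w p.1 p.2 ^ 2 + 2 * (w p.1 p.2 * y p)) + y p ^ 2 := by
      ext p; ring
    have h3 : IntegrableOn (fun p : ℝ × ℝ => w p.1 p.2 ^ 2 + 2 * (w p.1 p.2 * y p)) Q :=
      h.hiw.add (h1.const_mul 2)
    rw [e1]
    refine ⟨h3.add h2, ?_⟩
    rw [integral_add h3 h2, integral_add h.hiw (h1.const_mul 2), integral_const_mul]
  have main : ∀ ε > 0, ∫ p in Q, (w p.1 p.2 + zt p.1 p.2) ^ 2 ≤
      e 0 - e S + ε + (∫ p in Q, w p.1 p.2 ^ 2) + ∫ p in Q, zt p.1 p.2 ^ 2 := by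
    intro ε hε
    obtain ⟨η₀, hη₀, hlsc⟩ := h.lsc hε
    have hη : ∀ n : ℕ, 0 < S * ((1:ℝ)/((n:ℝ)+1)) := fun n => by positivity
    have hηS : ∀ n : ℕ, S * ((1:ℝ)/((n:ℝ)+1)) ≤ S := fun n => by
      have : (1:ℝ)/((n:ℝ)+1) ≤ 1 := by
        rw [div_le_one (by positivity)]
        have : (0:ℝ) ≤ n := Nat.cast_nonneg n
        linarith
      nlinarith
    have hηlim : Filter.Tendsto (fun n : ℕ => S * ((1:ℝ)/((n:ℝ)+1))) Filter.atTop (nhds 0) := by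
      have := (tendsto_one_div_add_atTop_nhds_zero_nat (𝕜 := ℝ)).const_mul S
      simpa using this
    refine fatou_real (f := fun n p => (w p.1 p.2 + D (S * ((1:ℝ)/((n:ℝ)+1))) p) ^ 2)
      (fun n => (sqexp _ (hwD _) (hD2 _)).1) (fun n p => sq_nonneg _)
      (sqexp (fun p => zt p.1 p.2) h.wzt_int h.hizt).1 (fun p => sq_nonneg _) ?_ ?_
    · filter_upwards [ae_restrict_mem hQm] with p hp
      refine Filter.Tendsto.pow (Filter.Tendsto.const_add _ ?_) 2
      have h1 := (h.hzt p.1 hp.1 p.2 hp.2).tendsto_slope_zero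
      have h2 : Filter.Tendsto (fun n : ℕ => -(S * ((1:ℝ)/((n:ℝ)+1)))) Filter.atTop
          (nhdsWithin 0 {0}ᶜ) := by
        refine tendsto_nhdsWithin_iff.2 ⟨by simpa using hηlim.neg, ?_⟩
        exact Filter.Eventually.of_forall fun n => (neg_neg_of_pos (hη n)).ne
      refine (h1.comp h2).congr fun n => ?_
      simp only [Function.comp, hD, smul_eq_mul, inv_neg, sub_eq_add_neg]
      ring
    · filter_upwards [(tendsto_order.1 hηlim).2 η₀ hη₀] with n hn
      set η := S * ((1:ℝ)/((n:ℝ)+1)) with hηdef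
      have hη' := hη n
      have hηS' := hηS n
      rw [← hηdef] at hη' hηS'
      have q1 := h.diff_ineq hη' hηS'
      have q2 := h.quot_bound hη' hηS'
      rw [(sqexp _ (hwD η) (hD2 η)).2]
      have q3 : ∫ p in Q, w p.1 p.2 * D η p =
          η⁻¹ * ∫ p in Q, w p.1 p.2 * (z p.1 p.2 - z p.1 (p.2 - η)) := by
        rw [← integral_const_mul]
        congr 1; ext p; simp only [hD]; ring
      have q4 : η * (e S - ε) ≤ ∫ t in (S-η)..S, e t := by
        have i1 : IntervalIntegrable e volume (S-η) S :=
          (intervalIntegrable_iff_integrableOn_Ioo_of_le (by linarith)).2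
            (h.e_int.mono_set (Ioo_subset_Ioo (by linarith) le_rfl))
        have := intervalIntegral.integral_mono_on (show S - η ≤ S by linarith)
          (intervalIntegrable_const (c := e S - ε)) i1
          (fun t ht => hlsc t ⟨by linarith [ht.1], ht.2⟩ (by linarith [ht.1]))
        rw [intervalIntegral.integral_const, smul_eq_mul] at this
        have e0 : S - (S - η) = η := by ring
        rwa [e0] at this
      change (∫ t in (S-η)..S, e t) - η * e 0 ≤ _ at q1
      have q5 : η * (2 * ∫ p in Q, w p.1 p.2 * D η p) ≤ η * (e 0 - e S + ε) := by
        rw [q3]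
        have : η * (2 * (η⁻¹ * ∫ p in Q, w p.1 p.2 * (z p.1 p.2 - z p.1 (p.2 - η)))) =
          2 * ∫ p in Q, w p.1 p.2 * (z p.1 p.2 - z p.1 (p.2 - η)) := by
          field_simp
        rw [this]
        linarith
      have q6 := le_of_mul_le_mul_left q5 hη'
      have q7 : ∫ p in Q, D η p ^ 2 ≤ ∫ p in Q, zt p.1 p.2 ^ 2 := q2
      linarith
  have fin := (sqexp (fun p => zt p.1 p.2) h.wzt_int h.hizt).2
  refine le_of_forall_pos_le_add fun ε hε => ?_
  have := main ε hε
  rw [fin] at this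
  linarith

end Cls

/-- Energy facts for functions that are only continuous on the closed rectangle. -/
lemma energy_closed {S : ℝ} {a a' : ℝ → ℝ} {z zx zt w : ℝ → ℝ → ℝ} {gg : ℝ × ℝ → ℝ}
    (hS : 0 < S) (ha : ContinuousOn a (Icc 0 1)) (ha0 : ∀ x ∈ Icc (0:ℝ) 1, 0 ≤ a x)
    (had : ∀ x ∈ Ioo (0:ℝ) 1, HasDerivAt a (a' x) x) (ha' : ContinuousOn a' (Ioo 0 1))
    (hz : ContinuousOn (fun p : ℝ × ℝ => z p.1 p.2) (Icc 0 1 ×ˢ Icc 0 S))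
    (hzx : ∀ x ∈ Ioo (0:ℝ) 1, ∀ t ∈ Icc (0:ℝ) S, HasDerivAt (fun y => z y t) (zx x t) x)
    (hw : ∀ x ∈ Ioo (0:ℝ) 1, ∀ t ∈ Ioo (0:ℝ) S, HasDerivAt (fun y => a y * zx y t) (w x t) x)
    (hzt : ∀ x ∈ Ioo (0:ℝ) 1, ∀ t ∈ Ioo (0:ℝ) S, HasDerivAt (fun u => z x u) (zt x t) t)
    (hbc : ∀ t ∈ Icc (0:ℝ) S, z 0 t = 0 ∧ z 1 t = 0)
    (hgg : IntegrableOn gg (Ioo 0 1 ×ˢ Ioo 0 S))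
    (hwg : ∀ x ∈ Ioo (0:ℝ) 1, ∀ t ∈ Ioo (0:ℝ) S, w x t ^ 2 ≤ gg (x, t))
    (hztg : ∀ x ∈ Ioo (0:ℝ) 1, ∀ t ∈ Ioo (0:ℝ) S, zt x t ^ 2 ≤ gg (x, t))
    (hie : ∀ t ∈ Icc (0:ℝ) S, IntegrableOn (fun x => a x * zx x t ^ 2) (Ioo 0 1)) :
    IntegrableOn (fun p : ℝ × ℝ => a p.1 * zx p.1 p.2 ^ 2) (Ioo 0 1 ×ˢ Ioo 0 S) ∧
    IntegrableOn (fun p : ℝ × ℝ => w p.1 p.2 * z p.1 p.2) (Ioo 0 1 ×ˢ Ioo 0 S) ∧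
    IntegrableOn (fun p : ℝ × ℝ => w p.1 p.2 * zt p.1 p.2) (Ioo 0 1 ×ˢ Ioo 0 S) ∧
    (∫ p in Ioo (0:ℝ) 1 ×ˢ Ioo (0:ℝ) S, a p.1 * zx p.1 p.2 ^ 2 =
      - ∫ p in Ioo (0:ℝ) 1 ×ˢ Ioo (0:ℝ) S, w p.1 p.2 * z p.1 p.2) ∧
    (∫ x in Ioo (0:ℝ) 1, a x * zx x S ^ 2) ≤ (∫ x in Ioo (0:ℝ) 1, a x * zx x 0 ^ 2)
      - 2 * ∫ p in Ioo (0:ℝ) 1 ×ˢ Ioo (0:ℝ) S, w p.1 p.2 * zt p.1 p.2 := by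
  set cx : ℝ → ℝ := fun x => max 0 (min x 1) with hcx
  set ct : ℝ → ℝ := fun t => max 0 (min t S) with hct
  have cxm : ∀ x, cx x ∈ Icc (0:ℝ) 1 := fun x =>
    ⟨le_max_left _ _, max_le zero_le_one (min_le_right _ _)⟩
  have ctm : ∀ t, ct t ∈ Icc (0:ℝ) S := fun x =>
    ⟨le_max_left _ _, max_le hS.le (min_le_right _ _)⟩
  have cxe : ∀ x ∈ Icc (0:ℝ) 1, cx x = x := fun x hx => by
    simp only [hcx]; rw [min_eq_left hx.2, max_eq_right hx.1]
  have cte : ∀ t ∈ Icc (0:ℝ) S, ct t = t := fun x hx => by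
    simp only [hct]; rw [min_eq_left hx.2, max_eq_right hx.1]
  have ctn : ∀ t ≤ 0, ct t = 0 := fun t ht => by
    simp only [hct]; rw [min_eq_left (by linarith), max_eq_left ht]
  have cxc : Continuous cx := by fun_prop
  have ctc : Continuous ct := by fun_prop
  have oc1 : ∀ x ∈ Ioo (0:ℝ) 1, x ∈ Icc (0:ℝ) 1 := fun x hx => ⟨hx.1.le, hx.2.le⟩
  have oc2 : ∀ x ∈ Ioo (0:ℝ) S, x ∈ Icc (0:ℝ) S := fun x hx => ⟨hx.1.le, hx.2.le⟩
  set ac : ℝ → ℝ := fun x => a (cx x) with hac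
  set zc : ℝ → ℝ → ℝ := fun x t => z (cx x) (ct t) with hzc
  have ace : ∀ x ∈ Ioo (0:ℝ) 1, ac x = a x := fun x hx => by simp only [hac, cxe x (oc1 x hx)]
  have nx : ∀ x ∈ Ioo (0:ℝ) 1, ∀ᶠ y in nhds x, y ∈ Ioo (0:ℝ) 1 := fun x hx =>
    Ioo_mem_nhds hx.1 hx.2
  have nt : ∀ x ∈ Ioo (0:ℝ) S, ∀ᶠ y in nhds x, y ∈ Ioo (0:ℝ) S := fun x hx =>
    Ioo_mem_nhds hx.1 hx.2
  have hacc : Continuous ac := ha.comp_continuous cxc cxm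
  have hzcc : Continuous (fun p : ℝ × ℝ => zc p.1 p.2) :=
    hz.comp_continuous (f := fun p : ℝ × ℝ => (cx p.1, ct p.2)) (by fun_prop)
      fun p => ⟨cxm _, ctm _⟩
  have hzx' : ∀ x ∈ Ioo (0:ℝ) 1, ∀ t ∈ Icc (0:ℝ) S,
      HasDerivAt (fun y => zc y t) (zx x t) x := by
    intro x hx t ht
    refine (hzx x hx t ht).congr_of_eventuallyEq ?_
    filter_upwards [nx x hx] with y hy
    simp only [hzc, cxe y (oc1 y hy), cte t ht]
  have hw' : ∀ x ∈ Ioo (0:ℝ) 1, ∀ t ∈ Ioo (0:ℝ) S,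
      HasDerivAt (fun y => ac y * zx y t) (w x t) x := by
    intro x hx t ht
    refine (hw x hx t ht).congr_of_eventuallyEq ?_
    filter_upwards [nx x hx] with y hy
    rw [ace y hy]
  have hzt' : ∀ x ∈ Ioo (0:ℝ) 1, ∀ t ∈ Ioo (0:ℝ) S,
      HasDerivAt (fun u => zc x u) (zt x t) t := by
    intro x hx t ht
    refine (hzt x hx t ht).congr_of_eventuallyEq ?_
    filter_upwards [nt t ht] with y hy
    simp only [hzc, cxe x (oc1 x hx), cte y (oc2 y hy)]
  have hm := meas_all (S := S) hacc hzcc (fun x hx t ht => hzx' x hx t (oc2 t ht)) hw' hzt'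
  have hQm : MeasurableSet (Ioo (0:ℝ) 1 ×ˢ Ioo (0:ℝ) S) :=
    measurableSet_Ioo.prod measurableSet_Ioo
  have h : Cls S ac a' zc zx zt w :=
    { hS := hS
      ha := hacc
      ha0 := fun x => ha0 _ (cxm x)
      had := by
        intro x hx
        refine (had x hx).congr_of_eventuallyEq ?_
        filter_upwards [nx x hx] with y hy
        exact ace y hy
      ha' := ha'
      hz := hzcc
      hzneg := by
        intro x t ht
        simp only [hzc, ctn t ht, ctn 0 le_rfl]
      hzx := hzx'
      hw := hw'
      hzt := hzt'
      hbc := by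
        intro t ht
        have h0 : cx 0 = 0 := cxe 0 (by simp)
        have h1 : cx 1 = 1 := cxe 1 (by simp)
        simp only [hzc, h0, h1]
        exact hbc _ (ctm t)
      hiw := by
        refine Integrable.mono' hgg (hm.2.1.pow 2) ?_
        filter_upwards [ae_restrict_mem hQm] with p hp
        rw [Real.norm_of_nonneg (sq_nonneg _)]
        exact hwg p.1 hp.1 p.2 hp.2
      hizt := by
        refine Integrable.mono' hgg (hm.2.2.pow 2) ?_
        filter_upwards [ae_restrict_mem hQm] with p hp
        rw [Real.norm_of_nonneg (sq_nonneg _)]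
        exact hztg p.1 hp.1 p.2 hp.2
      hie := by
        intro t ht
        refine (hie t ht).congr_fun (fun x hx => ?_) measurableSet_Ioo
        simp only [ace x hx] }
  have c1 : EqOn (fun p : ℝ × ℝ => ac p.1 * zx p.1 p.2 ^ 2)
      (fun p : ℝ × ℝ => a p.1 * zx p.1 p.2 ^ 2) (Ioo (0:ℝ) 1 ×ˢ Ioo (0:ℝ) S) := by
    intro p hp
    simp only [ace p.1 hp.1]
  have c2 : EqOn (fun p : ℝ × ℝ => w p.1 p.2 * zc p.1 p.2)
      (fun p : ℝ × ℝ => w p.1 p.2 * z p.1 p.2) (Ioo (0:ℝ) 1 ×ˢ Ioo (0:ℝ) S) := by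
    intro p hp
    simp only [hzc, cxe p.1 (oc1 _ hp.1), cte p.2 (oc2 _ hp.2)]
  have c3 : ∀ t, ∫ x in Ioo (0:ℝ) 1, ac x * zx x t ^ 2 = ∫ x in Ioo (0:ℝ) 1, a x * zx x t ^ 2 := by
    intro t
    refine setIntegral_congr_fun measurableSet_Ioo fun x hx => ?_
    simp only [ace x hx]
  refine ⟨h.energy_id.1.congr_fun c1 hQm, (h.mul_bdd_int h.hz).congr_fun c2 hQm, h.wzt_int, ?_, ?_⟩
  · rw [← setIntegral_congr_fun hQm c1, ← setIntegral_congr_fun hQm c2]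
    exact h.energy_id.2
  · rw [← c3, ← c3]
    exact h.energy_ineq

/-- The pointwise algebraic inequality. -/
lemma pointwise_ineq {m M Λ R b c d av z zx zt w hh G r r0 r2 r' : ℝ} (hm : 0 < m) (hR : 0 < R)
    (hbm : m ≤ b) (hbM : b ≤ M) (hc : |c| ≤ Λ) (hd : |d| ≤ Λ) (hav : 0 ≤ av)
    (hr : 0 ≤ r) (hr0 : r ≤ R * r0) (hr2 : r ≤ R * r2) (hr' : |r'| ≤ R * r0)
    (eq : zt - b * w - d * Real.sqrt av * zx + c * z = hh + G) :
    -2 * ((r * w) * (r * zt + r' * z))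
        - (4 * Λ ^ 2 / m) * (av * (r * zx) ^ 2 + (r * w) * (r * z)) ≤
      - min (1 / M) (m / 2) * (r ^ 2 * (zt ^ 2 + w ^ 2))
        + (4 / m + 4 / m * R ^ 2 + 4 * Λ ^ 2 / m * R ^ 2 + (4 * Λ ^ 2 / m) ^ 2 / m * R ^ 2) *
          (r0 ^ 2 * z ^ 2 + r ^ 2 * hh ^ 2 + r2 ^ 2 * G ^ 2) := by
  have hb : 0 < b := hm.trans_le hbm
  have hM : 0 < M := hb.trans_le hbM
  set k := 4 * Λ ^ 2 / m with hk
  have hk0 : 0 ≤ k := by positivity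
  have hsq : Real.sqrt av ^ 2 = av := Real.sq_sqrt hav
  have hc2 : c ^ 2 ≤ Λ ^ 2 := sq_le_sq' (by linarith [abs_le.1 hc]) (abs_le.1 hc).2
  have hd2 : d ^ 2 ≤ Λ ^ 2 := sq_le_sq' (by linarith [abs_le.1 hd]) (abs_le.1 hd).2
  have hrr : r ^ 2 ≤ R ^ 2 * r0 ^ 2 := by rw [← mul_pow]; exact pow_le_pow_left₀ hr hr0 2
  have hrr2 : r ^ 2 ≤ R ^ 2 * r2 ^ 2 := by rw [← mul_pow]; exact pow_le_pow_left₀ hr hr2 2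
  have hrr' : r' ^ 2 ≤ R ^ 2 * r0 ^ 2 := by
    rw [← mul_pow, ← sq_abs r']; exact pow_le_pow_left₀ (abs_nonneg _) hr' 2
  have hA : (zt - b * w) ^ 2 ≤ 4 * (hh ^ 2 + G ^ 2 + Λ ^ 2 * (av * zx ^ 2) + Λ ^ 2 * z ^ 2) := by
    have e1 : zt - b * w = hh + G + d * Real.sqrt av * zx + (-(c * z)) := by linarith
    have e2 : (d * Real.sqrt av * zx) ^ 2 ≤ Λ ^ 2 * (av * zx ^ 2) := by
      rw [mul_pow, mul_pow, hsq, mul_assoc]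
      exact mul_le_mul_of_nonneg_right hd2 (mul_nonneg hav (sq_nonneg _))
    have e3 : (-(c * z)) ^ 2 ≤ Λ ^ 2 * z ^ 2 := by
      rw [neg_sq, mul_pow]
      exact mul_le_mul_of_nonneg_right hc2 (sq_nonneg _)
    rw [e1]
    have four : ∀ p q s t : ℝ, (p + q + s + t) ^ 2 ≤ 4 * (p ^ 2 + q ^ 2 + s ^ 2 + t ^ 2) := by
      intro p q s t
      nlinarith [sq_nonneg (p - q), sq_nonneg (p - s), sq_nonneg (p - t), sq_nonneg (q - s),
        sq_nonneg (q - t), sq_nonneg (s - t)]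
    refine (four _ _ _ _).trans ?_
    linarith
  -- step B
  have hB : -2 * (w * zt) ≤ (zt - b * w) ^ 2 / m - zt ^ 2 / M - m * w ^ 2 := by
    have e1 : -2 * (w * zt) = (zt - b * w) ^ 2 / b - zt ^ 2 / b - b * w ^ 2 := by
      field_simp; ring
    have e2 : (zt - b * w) ^ 2 / b ≤ (zt - b * w) ^ 2 / m := by gcongr
    have e3 : zt ^ 2 / M ≤ zt ^ 2 / b := by gcongr
    have e4 : m * w ^ 2 ≤ b * w ^ 2 := by gcongr
    linarith
  have hB' : -2 * (w * zt) ≤ 4 / m * hh ^ 2 + 4 / m * G ^ 2 + k * (av * zx ^ 2) + k * z ^ 2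
      - zt ^ 2 / M - m * w ^ 2 := by
    have e2 : (zt - b * w) ^ 2 / m ≤
      4 * (hh ^ 2 + G ^ 2 + Λ ^ 2 * (av * zx ^ 2) + Λ ^ 2 * z ^ 2) / m := by gcongr
    have e3 : 4 * (hh ^ 2 + G ^ 2 + Λ ^ 2 * (av * zx ^ 2) + Λ ^ 2 * z ^ 2) / m =
      4 / m * hh ^ 2 + 4 / m * G ^ 2 + k * (av * zx ^ 2) + k * z ^ 2 := by
      rw [hk]; ring
    linarith
  -- Young inequality
  have young : ∀ p q : ℝ, p * q ≤ m / 4 * p ^ 2 + q ^ 2 / m := by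
    intro p q
    have : 0 ≤ (m * p / 2 - q) ^ 2 / m := by positivity
    have e : (m * p / 2 - q) ^ 2 / m = m / 4 * p ^ 2 + q ^ 2 / m - p * q := by
      field_simp; ring
    linarith
  have hC : -2 * ((r * w) * (r' * z)) ≤ m / 4 * (r * w) ^ 2 + 4 / m * (R ^ 2 * r0 ^ 2) * z ^ 2 := by
    have e1 := young (r * w) (-2 * (r' * z))
    have e2 : (-2 * (r' * z)) ^ 2 / m = 4 / m * r' ^ 2 * z ^ 2 := by ring
    have e3 : 4 / m * r' ^ 2 * z ^ 2 ≤ 4 / m * (R ^ 2 * r0 ^ 2) * z ^ 2 := by gcongr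
    linarith
  have hD : -k * ((r * w) * (r * z)) ≤ m / 4 * (r * w) ^ 2 + k ^ 2 / m * (R ^ 2 * r0 ^ 2) * z ^ 2 := by
    have e1 := young (r * w) (-k * (r * z))
    have e2 : (-k * (r * z)) ^ 2 / m = k ^ 2 / m * r ^ 2 * z ^ 2 := by ring
    have e3 : k ^ 2 / m * r ^ 2 * z ^ 2 ≤ k ^ 2 / m * (R ^ 2 * r0 ^ 2) * z ^ 2 := by gcongr
    linarith
  have hE := mul_le_mul_of_nonneg_left hB' (sq_nonneg r)
  have g1 : 4 / m * r ^ 2 * G ^ 2 ≤ 4 / m * (R ^ 2 * r2 ^ 2) * G ^ 2 := by gcongr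
  have g2 : k * r ^ 2 * z ^ 2 ≤ k * (R ^ 2 * r0 ^ 2) * z ^ 2 := by gcongr
  have g3 : min (1 / M) (m / 2) * (r ^ 2 * zt ^ 2) ≤ (1 / M) * (r ^ 2 * zt ^ 2) := by
    gcongr; exact min_le_left _ _
  have g4 : min (1 / M) (m / 2) * (r ^ 2 * w ^ 2) ≤ (m / 2) * (r ^ 2 * w ^ 2) := by
    gcongr; exact min_le_right _ _
  have p1 : 0 ≤ 4 / m := by positivity
  have n1 : 0 ≤ r0 ^ 2 * z ^ 2 := by positivity
  have n2 : 0 ≤ r ^ 2 * hh ^ 2 := by positivity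
  have n3 : 0 ≤ r2 ^ 2 * G ^ 2 := by positivity
  have q1 : 0 ≤ 4 / m * R ^ 2 := by positivity
  have q2 : 0 ≤ k * R ^ 2 := by positivity
  have q3 : 0 ≤ k ^ 2 / m * R ^ 2 := by positivity
  have t1 := mul_nonneg p1 n1
  have t2 := mul_nonneg p1 n3
  have t3 := mul_nonneg q1 n2
  have t4 := mul_nonneg q2 n2
  have t5 := mul_nonneg q2 n3
  have t6 := mul_nonneg q3 n2
  have t7 := mul_nonneg q3 n3
  have e0 : zt ^ 2 / M = 1 / M * zt ^ 2 := by ring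
  rw [e0] at hE
  ring_nf at hE hC hD g1 g2 g3 g4 t1 t2 t3 t4 t5 t6 t7 ⊢
  linarith

lemma weights {T s K₁ K₂ τ₀ ζ₀ C₃ : ℝ} (hs : 0 < s) (hK₁ : K₁ < 0) (hK₂ : 0 < K₂)
    (hτ₀ : 0 < τ₀) (hζ₀ : 1 ≤ ζ₀) (hC₃ : 0 < C₃) {τ τ' : ℝ → ℝ}
    (hτ_deriv : ∀ t ∈ Ico (0:ℝ) T, HasDerivAt τ (τ' t) t)
    (hτ_lb : ∀ t ∈ Ico (0:ℝ) T, τ₀ ≤ τ t)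
    (hτ_grow : ∀ t ∈ Ico (0:ℝ) T, |τ' t| ≤ C₃ * τ t ^ ((5:ℝ)/4)) :
    ∃ R > 0, ∃ r' : ℝ → ℝ, ∀ t ∈ Ico (0:ℝ) T,
      HasDerivAt (rho1 s K₁ K₂ τ) (r' t) t ∧ 0 < rho1 s K₁ K₂ τ t ∧
      rho1 s K₁ K₂ τ t ≤ R * rho0 s K₁ τ t ∧ rho1 s K₁ K₂ τ t ≤ R * rho2 s K₁ K₂ ζ₀ τ t ∧
      |r' t| ≤ R * rho0 s K₁ τ t := by
  have hKτ : 0 < K₂ * τ₀ := by positivity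
  set R1 := (K₂ * τ₀) ^ (-(3:ℝ)/2) with hR1
  set R2 := (K₂ * τ₀) ^ (-(1:ℝ)/2) with hR2
  set R3 := C₃ * (s * -K₁ + 3 / 2 / τ₀) * (K₂ ^ (-(3:ℝ)/2) * τ₀ ^ (-(1:ℝ)/4)) with hR3
  have p1 : 0 < R1 := by positivity
  have p2 : 0 < R2 := by positivity
  have hsK : 0 < s * -K₁ := by nlinarith
  have p3 : 0 < R3 := by positivity
  refine ⟨R1 + R2 + R3, by positivity, fun t =>
    (Real.exp (-(s * (K₁ * τ t))) * (-(s * (K₁ * τ' t)))) * (K₂ * τ t) ^ (-(3:ℝ)/2) +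
      Real.exp (-(s * (K₁ * τ t))) *
        ((K₂ * τ' t) * (-(3:ℝ)/2) * (K₂ * τ t) ^ (-(3:ℝ)/2 - 1)), ?_⟩
  intro t ht
  have hlb := hτ_lb t ht
  have hτ : 0 < τ t := hτ₀.trans_le hlb
  have hK : 0 < K₂ * τ t := by positivity
  have hd := hτ_deriv t ht
  have b1 : (K₂ * τ t) ^ (-(3:ℝ)/2) ≤ R1 :=
    Real.rpow_le_rpow_of_nonpos hKτ (by gcongr) (by norm_num)
  have b2 : (K₂ * τ t) ^ (-(1:ℝ)/2) ≤ R2 :=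
    Real.rpow_le_rpow_of_nonpos hKτ (by gcongr) (by norm_num)
  have b3 : τ t ^ (-(1:ℝ)/4) ≤ τ₀ ^ (-(1:ℝ)/4) :=
    Real.rpow_le_rpow_of_nonpos hτ₀ hlb (by norm_num)
  have hr0 : 0 < rho0 s K₁ τ t := Real.exp_pos _
  have hr2 : 0 < rho2 s K₁ K₂ ζ₀ τ t := by
    unfold rho2; positivity
  refine ⟨?_, ?_, ?_, ?_, ?_⟩
  · unfold rho1
    have h1 : HasDerivAt (fun t => Real.exp (-(s * (K₁ * τ t))))
        (Real.exp (-(s * (K₁ * τ t))) * (-(s * (K₁ * τ' t)))) t :=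
      (((hd.const_mul K₁).const_mul s).neg).exp
    have h2 := (hd.const_mul K₂).rpow_const (p := -(3:ℝ)/2) (Or.inl hK.ne')
    exact h1.mul h2
  · unfold rho1; positivity
  · have : rho1 s K₁ K₂ τ t ≤ R1 * rho0 s K₁ τ t := by
      unfold rho1 rho0
      rw [mul_comm]
      gcongr
    nlinarith [mul_pos p2 hr0, mul_pos p3 hr0]
  · have : rho1 s K₁ K₂ τ t ≤ R2 * rho2 s K₁ K₂ ζ₀ τ t := by
      have e1 : (K₂ * τ t) ^ (-(3:ℝ)/2) = (K₂ * τ t) ^ (-(1:ℝ)/2) * (K₂ * τ t)⁻¹ := by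
        rw [← Real.rpow_neg_one, ← Real.rpow_add hK]; norm_num
      have e2 : (K₂ * τ t)⁻¹ ≤ (K₂ * τ t / ζ₀)⁻¹ := by
        have : K₂ * τ t / ζ₀ ≤ K₂ * τ t := div_le_self hK.le hζ₀
        gcongr
      have e3 : Real.exp (-(s * (K₁ * τ t))) ≤ Real.exp (-(3 * s * (K₁ * τ t) / 2)) := by
        refine Real.exp_le_exp.2 ?_
        nlinarith [mul_pos hsK hτ]
      unfold rho1 rho2
      rw [e1]
      calc Real.exp (-(s * (K₁ * τ t))) * ((K₂ * τ t) ^ (-(1:ℝ)/2) * (K₂ * τ t)⁻¹)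
          ≤ Real.exp (-(3 * s * (K₁ * τ t) / 2)) * (R2 * (K₂ * τ t / ζ₀)⁻¹) := by gcongr
        _ = _ := by ring
    nlinarith [mul_pos p1 hr2, mul_pos p3 hr2]
  · have : |(Real.exp (-(s * (K₁ * τ t))) * (-(s * (K₁ * τ' t)))) * (K₂ * τ t) ^ (-(3:ℝ)/2) +
      Real.exp (-(s * (K₁ * τ t))) *
        ((K₂ * τ' t) * (-(3:ℝ)/2) * (K₂ * τ t) ^ (-(3:ℝ)/2 - 1))| ≤ R3 * rho0 s K₁ τ t := by
      have e1 : (K₂ * τ t) ^ (-(3:ℝ)/2 - 1) = (K₂ * τ t) ^ (-(3:ℝ)/2) * (K₂ * τ t)⁻¹ := by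
        rw [← Real.rpow_neg_one, ← Real.rpow_add hK]; norm_num
      have e2 : (Real.exp (-(s * (K₁ * τ t))) * (-(s * (K₁ * τ' t)))) * (K₂ * τ t) ^ (-(3:ℝ)/2) +
        Real.exp (-(s * (K₁ * τ t))) *
          ((K₂ * τ' t) * (-(3:ℝ)/2) * (K₂ * τ t) ^ (-(3:ℝ)/2 - 1)) =
          τ' t * ((s * -K₁ - 3 / 2 / τ t) * (K₂ * τ t) ^ (-(3:ℝ)/2)) * rho0 s K₁ τ t := by
        rw [e1, rho0]
        field_simp
        ring
      have e3 : (K₂ * τ t) ^ (-(3:ℝ)/2) = K₂ ^ (-(3:ℝ)/2) * τ t ^ (-(3:ℝ)/2) :=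
        Real.mul_rpow hK₂.le hτ.le
      have e4 : τ t ^ ((5:ℝ)/4) * τ t ^ (-(3:ℝ)/2) = τ t ^ (-(1:ℝ)/4) := by
        rw [← Real.rpow_add hτ]; norm_num
      have e5 : |s * -K₁ - 3 / 2 / τ t| ≤ s * -K₁ + 3 / 2 / τ₀ := by
        have q1 : 3 / 2 / τ t ≤ 3 / 2 / τ₀ := by gcongr
        have q2 : 0 < 3 / 2 / τ t := by positivity
        rw [abs_le]; constructor <;> linarith
      rw [e2, abs_mul, abs_mul, abs_mul, abs_of_pos hr0,
        abs_of_pos (show 0 < (K₂ * τ t) ^ (-(3:ℝ)/2) by positivity)]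
      refine mul_le_mul_of_nonneg_right ?_ hr0.le
      calc |τ' t| * (|s * -K₁ - 3 / 2 / τ t| * (K₂ * τ t) ^ (-(3:ℝ)/2))
          ≤ (C₃ * τ t ^ ((5:ℝ)/4)) * ((s * -K₁ + 3 / 2 / τ₀) * (K₂ * τ t) ^ (-(3:ℝ)/2)) := by
            have := hτ_grow t ht
            gcongr
        _ = C₃ * (s * -K₁ + 3 / 2 / τ₀) * (K₂ ^ (-(3:ℝ)/2) *
              (τ t ^ ((5:ℝ)/4) * τ t ^ (-(3:ℝ)/2))) := by rw [e3]; ring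
        _ ≤ R3 := by
            rw [e4, hR3]
            gcongr
    refine this.trans ?_
    nlinarith [mul_pos p1 hr0, mul_pos p2 hr0]

/-- The weighted estimate up to a time `S < T`. -/
lemma local_est {T S m M Λ R α₁ β₁ : ℝ} {a a' b r r0 r2 r' : ℝ → ℝ}
    {c₁ d₁ z zx zt azxx h G : ℝ → ℝ → ℝ}
    (hS : 0 < S) (hST : S < T) (hm : 0 < m) (hR : 0 < R)
    (ha_cont : ContinuousOn a (Icc 0 1))
    (ha_nonneg : ∀ x ∈ Icc (0:ℝ) 1, 0 ≤ a x)
    (ha_deriv : ∀ x ∈ Ioc (0:ℝ) 1, HasDerivAt a (a' x) x)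
    (ha'_cont : ContinuousOn a' (Ioc 0 1))
    (hω : 0 < α₁ ∧ α₁ < β₁ ∧ β₁ < 1)
    (hr : ∀ t ∈ Ico (0:ℝ) T, HasDerivAt r (r' t) t ∧ 0 < r t ∧ r t ≤ R * r0 t ∧
      r t ≤ R * r2 t ∧ |r' t| ≤ R * r0 t)
    (hb : ∀ t ∈ Icc (0:ℝ) T, m ≤ b t ∧ b t ≤ M)
    (hcd : ∀ x t, |c₁ x t| ≤ Λ ∧ |d₁ x t| ≤ Λ)
    (hz : ContinuousOn (fun p : ℝ × ℝ => z p.1 p.2) (Icc 0 1 ×ˢ Icc 0 T))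
    (hzx : ∀ x ∈ Ioo (0:ℝ) 1, ∀ t ∈ Ico (0:ℝ) T, HasDerivAt (fun w => z w t) (zx x t) x)
    (hw : ∀ x ∈ Ioo (0:ℝ) 1, ∀ t ∈ Ioo (0:ℝ) T,
          HasDerivAt (fun w => a w * zx w t) (azxx x t) x)
    (hzt : ∀ x ∈ Ioo (0:ℝ) 1, ∀ t ∈ Ioo (0:ℝ) T, HasDerivAt (fun u => z x u) (zt x t) t)
    (heq : ∀ x ∈ Ioo (0:ℝ) 1, ∀ t ∈ Ioo (0:ℝ) T,
          zt x t - b t * azxx x t - d₁ x t * Real.sqrt (a x) * zx x t + c₁ x t * z x t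
            = (if x ∈ Ioo α₁ β₁ then h x t else 0) + G x t)
    (hbc : ∀ t ∈ Icc (0:ℝ) T, z 0 t = 0 ∧ z 1 t = 0)
    (hF : IntegrableOn (fun p : ℝ × ℝ => r p.2 ^ 2 * (zt p.1 p.2 ^ 2 + azxx p.1 p.2 ^ 2))
      (Ioo 0 1 ×ˢ Ioo 0 T))
    (hI1 : IntegrableOn (fun p : ℝ × ℝ => r0 p.2 ^ 2 * z p.1 p.2 ^ 2) (Ioo 0 1 ×ˢ Ioo 0 T))
    (hI2 : IntegrableOn (fun p : ℝ × ℝ => r p.2 ^ 2 * h p.1 p.2 ^ 2) (Ioo α₁ β₁ ×ˢ Ioo 0 T))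
    (hI3 : IntegrableOn (fun p : ℝ × ℝ => r2 p.2 ^ 2 * G p.1 p.2 ^ 2) (Ioo 0 1 ×ˢ Ioo 0 T))
    (hie : ∀ t ∈ Ico (0:ℝ) T, IntegrableOn (fun x => a x * zx x t ^ 2) (Ioo 0 1)) :
    r S ^ 2 * (∫ x in Ioo (0:ℝ) 1, a x * zx x S ^ 2) +
      min (1 / M) (m / 2) * (∫ p in Ioo (0:ℝ) 1 ×ˢ Ioo (0:ℝ) S,
        r p.2 ^ 2 * (zt p.1 p.2 ^ 2 + azxx p.1 p.2 ^ 2)) ≤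
    r 0 ^ 2 * (∫ x in Ioo (0:ℝ) 1, a x * zx x 0 ^ 2) +
      (4 / m + 4 / m * R ^ 2 + 4 * Λ ^ 2 / m * R ^ 2 + (4 * Λ ^ 2 / m) ^ 2 / m * R ^ 2) *
      ((∫ p in Ioo (0:ℝ) 1 ×ˢ Ioo (0:ℝ) T, r0 p.2 ^ 2 * z p.1 p.2 ^ 2) +
       (∫ p in Ioo α₁ β₁ ×ˢ Ioo (0:ℝ) T, r p.2 ^ 2 * h p.1 p.2 ^ 2) +
       (∫ p in Ioo (0:ℝ) 1 ×ˢ Ioo (0:ℝ) T, r2 p.2 ^ 2 * G p.1 p.2 ^ 2)) := by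
  have cI : ∀ t ∈ Icc (0:ℝ) S, t ∈ Ico (0:ℝ) T := fun t ht => ⟨ht.1, ht.2.trans_lt hST⟩
  have oI : ∀ t ∈ Ioo (0:ℝ) S, t ∈ Ioo (0:ℝ) T := fun t ht => ⟨ht.1, ht.2.trans hST⟩
  have oc : ∀ t ∈ Ioo (0:ℝ) S, t ∈ Ico (0:ℝ) T := fun t ht => ⟨ht.1.le, ht.2.trans hST⟩
  have ox : ∀ t ∈ Ioo (0:ℝ) 1, t ∈ Icc (0:ℝ) 1 := fun t ht => ⟨ht.1.le, ht.2.le⟩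
  have hQ : Ioo (0:ℝ) 1 ×ˢ Ioo (0:ℝ) S ⊆ Ioo (0:ℝ) 1 ×ˢ Ioo (0:ℝ) T :=
    prod_mono_right (Ioo_subset_Ioo_right hST.le)
  have hQm : MeasurableSet (Ioo (0:ℝ) 1 ×ˢ Ioo (0:ℝ) S) :=
    measurableSet_Ioo.prod measurableSet_Ioo
  have hrc : ContinuousOn r (Icc 0 S) := fun t ht =>
    (hr t (cI t ht)).1.continuousAt.continuousWithinAt
  have hrsq : ∀ t ∈ Ico (0:ℝ) T, r' t ^ 2 ≤ R ^ 2 * r0 t ^ 2 := fun t ht => by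
    rw [← mul_pow, ← sq_abs (r' t)]
    exact pow_le_pow_left₀ (abs_nonneg _) (hr t ht).2.2.2.2 2
  obtain ⟨i1, i2, i3, e1, e2⟩ := energy_closed (S := S) (a := a) (a' := a')
    (z := fun x t => r t * z x t) (zx := fun x t => r t * zx x t)
    (zt := fun x t => r t * zt x t + r' t * z x t) (w := fun x t => r t * azxx x t)
    (gg := fun p => 2 * (r p.2 ^ 2 * (zt p.1 p.2 ^ 2 + azxx p.1 p.2 ^ 2)) +
      2 * R ^ 2 * (r0 p.2 ^ 2 * z p.1 p.2 ^ 2))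
    hS ha_cont ha_nonneg (fun x hx => ha_deriv x ⟨hx.1, hx.2.le⟩)
    (ha'_cont.mono Ioo_subset_Ioc_self)
    (by
      refine ContinuousOn.mul (hrc.comp continuousOn_snd fun p hp => hp.2) (hz.mono ?_)
      exact prod_mono_right (Icc_subset_Icc_right hST.le))
    (fun x hx t ht => (hzx x hx t (cI t ht)).const_mul (r t))
    (fun x hx t ht => by
      have := (hw x hx t (oI t ht)).const_mul (r t)
      refine this.congr_of_eventuallyEq (Filter.Eventually.of_forall fun y => ?_)
      ring)
    (fun x hx t ht => by
      have := (hr t (oc t ht)).1.mul (hzt x hx t (oI t ht))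
      refine HasDerivAt.congr_deriv (f := fun u => r u * z x u) this ?_
      ring)
    (fun t ht => by
      have := hbc t ⟨ht.1, ht.2.trans hST.le⟩
      simp [this.1, this.2])
    (Integrable.fun_add ((hF.mono_set hQ).const_mul 2)
      ((hI1.mono_set hQ).const_mul (2 * R ^ 2)))
    (fun x hx t ht => by
      have h1 : 0 ≤ r t ^ 2 * zt x t ^ 2 := by positivity
      have h2 : 0 ≤ r t ^ 2 * azxx x t ^ 2 := by positivity
      have h3 : 0 ≤ R ^ 2 * (r0 t ^ 2 * z x t ^ 2) := by positivity
      show (r t * azxx x t) ^ 2 ≤ 2 * (r t ^ 2 * (zt x t ^ 2 + azxx x t ^ 2)) +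
        2 * R ^ 2 * (r0 t ^ 2 * z x t ^ 2)
      nlinarith)
    (fun x hx t ht => by
      have h1 : 0 ≤ r t ^ 2 * azxx x t ^ 2 := by positivity
      have h3 : r' t ^ 2 * z x t ^ 2 ≤ R ^ 2 * r0 t ^ 2 * z x t ^ 2 :=
        mul_le_mul_of_nonneg_right (hrsq t (oc t ht)) (sq_nonneg _)
      show (r t * zt x t + r' t * z x t) ^ 2 ≤ 2 * (r t ^ 2 * (zt x t ^ 2 + azxx x t ^ 2)) +
        2 * R ^ 2 * (r0 t ^ 2 * z x t ^ 2)
      nlinarith [sq_nonneg (r t * zt x t - r' t * z x t)])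
    (fun t ht => by
      refine IntegrableOn.congr_fun (f := fun x => r t ^ 2 * (a x * zx x t ^ 2))
        ((hie t (cI t ht)).const_mul (r t ^ 2)) (fun x _ => ?_) measurableSet_Ioo
      show r t ^ 2 * (a x * zx x t ^ 2) = a x * (r t * zx x t) ^ 2
      ring)
  have ev : ∀ t, ∫ x in Ioo (0:ℝ) 1, a x * (r t * zx x t) ^ 2 =
      r t ^ 2 * ∫ x in Ioo (0:ℝ) 1, a x * zx x t ^ 2 := by
    intro t
    rw [← integral_const_mul]
    congr 1
    funext x
    ring
  simp only [ev] at e2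
  -- the control term
  set hh : ℝ × ℝ → ℝ := fun p => r p.2 ^ 2 * (if p.1 ∈ Ioo α₁ β₁ then h p.1 p.2 else 0) ^ 2
    with hhh
  have hind : hh = (Ioo α₁ β₁ ×ˢ (univ : Set ℝ)).indicator
      (fun p : ℝ × ℝ => r p.2 ^ 2 * h p.1 p.2 ^ 2) := by
    funext p
    by_cases hp : p.1 ∈ Ioo α₁ β₁
    · rw [indicator_of_mem (by exact ⟨hp, mem_univ _⟩)]
      simp only [hhh, if_pos hp]
    · rw [indicator_of_notMem (fun h' => hp h'.1)]
      simp only [hhh, if_neg hp]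
      ring
  have hUm : MeasurableSet (Ioo α₁ β₁ ×ˢ (univ : Set ℝ)) :=
    measurableSet_Ioo.prod MeasurableSet.univ
  have hset : (Ioo (0:ℝ) 1 ×ˢ Ioo (0:ℝ) T) ∩ (Ioo α₁ β₁ ×ˢ (univ : Set ℝ)) =
      Ioo α₁ β₁ ×ˢ Ioo (0:ℝ) T := by
    rw [prod_inter_prod, inter_univ, inter_eq_right.2]
    exact Ioo_subset_Ioo hω.1.le hω.2.2.le
  have hhi : IntegrableOn hh (Ioo (0:ℝ) 1 ×ˢ Ioo (0:ℝ) T) := by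
    rw [hind, integrableOn_indicator_iff hUm, inter_comm, hset]
    exact hI2
  have hhe : ∫ p in Ioo (0:ℝ) 1 ×ˢ Ioo (0:ℝ) T, hh p =
      ∫ p in Ioo α₁ β₁ ×ˢ Ioo (0:ℝ) T, r p.2 ^ 2 * h p.1 p.2 ^ 2 := by
    rw [hind, setIntegral_indicator hUm, hset]
  set K := 4 / m + 4 / m * R ^ 2 + 4 * Λ ^ 2 / m * R ^ 2 + (4 * Λ ^ 2 / m) ^ 2 / m * R ^ 2 with hK
  have hK0 : 0 ≤ K := by positivity
  set c0 := min (1 / M) (m / 2) with hc0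
  set k := 4 * Λ ^ 2 / m with hk
  -- integrate the pointwise inequality
  have j1 := hI1.mono_set hQ
  have j2 := hhi.mono_set hQ
  have j3 := hI3.mono_set hQ
  have i12k := (Integrable.fun_add i1 i2).const_mul k
  have j12 := Integrable.fun_add j1 j2
  have j123k := (Integrable.fun_add j12 j3).const_mul K
  have hintg := setIntegral_mono_on
    (Integrable.sub (f := fun p : ℝ × ℝ => -2 * (r p.2 * azxx p.1 p.2 * (r p.2 * zt p.1 p.2 + r' p.2 * z p.1 p.2)))
      (i3.const_mul (-2)) i12k)
    (Integrable.fun_add ((hF.mono_set hQ).const_mul (-c0)) j123k) hQm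
    (fun p hp => by
      have hp1 := hp.1
      have hp2 := hp.2
      obtain ⟨_, q1, q2, q3, q4⟩ := hr p.2 (oc _ hp2)
      exact pointwise_ineq hm hR (hb p.2 ⟨hp2.1.le, (hp2.2.trans hST).le⟩).1
        (hb p.2 ⟨hp2.1.le, (hp2.2.trans hST).le⟩).2 (hcd p.1 p.2).1 (hcd p.1 p.2).2
        (ha_nonneg _ (ox _ hp1)) q1.le q2 q3 q4 (heq p.1 hp1 p.2 (oI _ hp2)))
  have l1 : ∫ p in Ioo (0:ℝ) 1 ×ˢ Ioo (0:ℝ) S,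
      (-2 * (r p.2 * azxx p.1 p.2 * (r p.2 * zt p.1 p.2 + r' p.2 * z p.1 p.2)) -
        k * (a p.1 * (r p.2 * zx p.1 p.2) ^ 2 + r p.2 * azxx p.1 p.2 * (r p.2 * z p.1 p.2))) =
      -2 * ∫ p in Ioo (0:ℝ) 1 ×ˢ Ioo (0:ℝ) S,
        r p.2 * azxx p.1 p.2 * (r p.2 * zt p.1 p.2 + r' p.2 * z p.1 p.2) := by
    rw [integral_sub (i3.const_mul (-2)) i12k, integral_const_mul,
      integral_const_mul, integral_add i1 i2, e1]
    ring
  have l2 : ∫ p in Ioo (0:ℝ) 1 ×ˢ Ioo (0:ℝ) S,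
      (-c0 * (r p.2 ^ 2 * (zt p.1 p.2 ^ 2 + azxx p.1 p.2 ^ 2)) +
        K * (r0 p.2 ^ 2 * z p.1 p.2 ^ 2 + hh p + r2 p.2 ^ 2 * G p.1 p.2 ^ 2)) =
      -c0 * (∫ p in Ioo (0:ℝ) 1 ×ˢ Ioo (0:ℝ) S,
        r p.2 ^ 2 * (zt p.1 p.2 ^ 2 + azxx p.1 p.2 ^ 2)) +
      K * ((∫ p in Ioo (0:ℝ) 1 ×ˢ Ioo (0:ℝ) S, r0 p.2 ^ 2 * z p.1 p.2 ^ 2) +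
        (∫ p in Ioo (0:ℝ) 1 ×ˢ Ioo (0:ℝ) S, hh p) +
        (∫ p in Ioo (0:ℝ) 1 ×ˢ Ioo (0:ℝ) S, r2 p.2 ^ 2 * G p.1 p.2 ^ 2)) := by
    rw [integral_add ((hF.mono_set hQ).const_mul (-c0)) j123k,
      integral_const_mul, integral_const_mul, integral_add j12 j3, integral_add j1 j2]
  have hintg2 := l1.symm.le.trans (hintg.trans l2.le)
  have n1 : ∫ p in Ioo (0:ℝ) 1 ×ˢ Ioo (0:ℝ) S, r0 p.2 ^ 2 * z p.1 p.2 ^ 2 ≤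
      ∫ p in Ioo (0:ℝ) 1 ×ˢ Ioo (0:ℝ) T, r0 p.2 ^ 2 * z p.1 p.2 ^ 2 :=
    setIntegral_mono_set hI1 (Filter.Eventually.of_forall fun p => by
      show (0:ℝ) ≤ r0 p.2 ^ 2 * z p.1 p.2 ^ 2
      positivity) (Filter.Eventually.of_forall hQ)
  have n2 : ∫ p in Ioo (0:ℝ) 1 ×ˢ Ioo (0:ℝ) S, hh p ≤
      ∫ p in Ioo (0:ℝ) 1 ×ˢ Ioo (0:ℝ) T, hh p :=
    setIntegral_mono_set hhi (Filter.Eventually.of_forall fun p =>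
      mul_nonneg (sq_nonneg _) (sq_nonneg _)) (Filter.Eventually.of_forall hQ)
  have n3 : ∫ p in Ioo (0:ℝ) 1 ×ˢ Ioo (0:ℝ) S, r2 p.2 ^ 2 * G p.1 p.2 ^ 2 ≤
      ∫ p in Ioo (0:ℝ) 1 ×ˢ Ioo (0:ℝ) T, r2 p.2 ^ 2 * G p.1 p.2 ^ 2 :=
    setIntegral_mono_set hI3 (Filter.Eventually.of_forall fun p => by
      show (0:ℝ) ≤ r2 p.2 ^ 2 * G p.1 p.2 ^ 2
      positivity) (Filter.Eventually.of_forall hQ)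
  rw [hhe] at n2
  have n4 := mul_le_mul_of_nonneg_left (add_le_add (add_le_add n1 n2) n3) hK0
  linarith
/-- Second additional weighted energy estimate for classical solutions of the linearized
degenerate parabolic system `z_t − b(t)(a z_x)_x − d₁ √a z_x + c₁ z = h̃ 1_{ω₁} + G` on
`(0,1) × (0,T)` with Dirichlet boundary conditions and initial data `z₀ ∈ H¹_a(0,1)`:
`sup_t ρ₁² ∫ a z_x² + ∫∫ ρ₁² (z_t² + ((a z_x)_x)²)
  ≤ C (∫∫ ρ₀² z² + ∫∫_{ω₁} ρ₁² h̃² + ∫∫ ρ₂² G² + ∫ z₀² + ∫ a z₀'²)`,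
with `C` depending only on `T`, `m`, `M`, `Λ` and the weight constants. -/
theorem second_weighted_energy_estimate
    (T : ℝ) (hT : 0 < T)
    (a a' : ℝ → ℝ)
    (ha_cont : ContinuousOn a (Icc 0 1))
    (ha_nonneg : ∀ x ∈ Icc (0:ℝ) 1, 0 ≤ a x)
    (ha_deriv : ∀ x ∈ Ioc (0:ℝ) 1, HasDerivAt a (a' x) x)
    (ha'_cont : ContinuousOn a' (Ioc 0 1))
    (m M Λ : ℝ) (hm : 0 < m) (hmM : m ≤ M) (hΛ : 0 < Λ)
    (s K₁ K₂ τ₀ ζ₀ C₃ : ℝ) (hs : 0 < s) (hK₁ : K₁ < 0) (hK₂ : 0 < K₂)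
    (hτ₀ : 0 < τ₀) (hζ₀ : 1 ≤ ζ₀) (hC₃ : 0 < C₃)
    (τ τ' : ℝ → ℝ)
    (hτ_deriv : ∀ t ∈ Ico (0:ℝ) T, HasDerivAt τ (τ' t) t)
    (hτ_lb : ∀ t ∈ Ico (0:ℝ) T, τ₀ ≤ τ t)
    (hτ_grow : ∀ t ∈ Ico (0:ℝ) T, |τ' t| ≤ C₃ * τ t ^ ((5:ℝ)/4))
    (α₁ β₁ : ℝ) (hω : 0 < α₁ ∧ α₁ < β₁ ∧ β₁ < 1) :
    ∃ C > (0:ℝ),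
      ∀ (b : ℝ → ℝ) (c₁ d₁ z zx zt azxx h G : ℝ → ℝ → ℝ) (z₀ z₀' : ℝ → ℝ),
        ContinuousOn b (Icc 0 T) →
        (∀ t ∈ Icc (0:ℝ) T, m ≤ b t ∧ b t ≤ M) →
        (∀ x t, |c₁ x t| ≤ Λ ∧ |d₁ x t| ≤ Λ) →
        ContinuousOn (fun p : ℝ × ℝ => z p.1 p.2) (Icc 0 1 ×ˢ Icc 0 T) →
        (∀ x ∈ Ioo (0:ℝ) 1, ∀ t ∈ Ico (0:ℝ) T, HasDerivAt (fun w => z w t) (zx x t) x) →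
        (∀ x ∈ Ioo (0:ℝ) 1, ∀ t ∈ Ioo (0:ℝ) T,
          HasDerivAt (fun w => a w * zx w t) (azxx x t) x) →
        (∀ x ∈ Ioo (0:ℝ) 1, ∀ t ∈ Ioo (0:ℝ) T, HasDerivAt (fun u => z x u) (zt x t) t) →
        (∀ x ∈ Ioo (0:ℝ) 1, ∀ t ∈ Ioo (0:ℝ) T,
          zt x t - b t * azxx x t - d₁ x t * Real.sqrt (a x) * zx x t + c₁ x t * z x t
            = (if x ∈ Ioo α₁ β₁ then h x t else 0) + G x t) →
        (∀ t ∈ Icc (0:ℝ) T, z 0 t = 0 ∧ z 1 t = 0) →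
        (∀ x, z x 0 = z₀ x) →
        (∀ x ∈ Ioo (0:ℝ) 1, HasDerivAt z₀ (z₀' x) x) →
        IntegrableOn (fun x => a x * z₀' x ^ 2) (Ioo 0 1) →
        IntegrableOn
          (fun p : ℝ × ℝ => rho1 s K₁ K₂ τ p.2 ^ 2 *
            (zt p.1 p.2 ^ 2 + azxx p.1 p.2 ^ 2)) (Ioo 0 1 ×ˢ Ioo 0 T) →
        IntegrableOn
          (fun p : ℝ × ℝ => rho0 s K₁ τ p.2 ^ 2 * z p.1 p.2 ^ 2)
          (Ioo 0 1 ×ˢ Ioo 0 T) →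
        IntegrableOn
          (fun p : ℝ × ℝ => rho1 s K₁ K₂ τ p.2 ^ 2 * h p.1 p.2 ^ 2)
          (Ioo α₁ β₁ ×ˢ Ioo 0 T) →
        IntegrableOn
          (fun p : ℝ × ℝ => rho2 s K₁ K₂ ζ₀ τ p.2 ^ 2 * G p.1 p.2 ^ 2)
          (Ioo 0 1 ×ˢ Ioo 0 T) →
        (∀ t ∈ Ico (0:ℝ) T,
          IntegrableOn (fun x => a x * zx x t ^ 2) (Ioo 0 1)) →
        ∀ t ∈ Ico (0:ℝ) T,
          rho1 s K₁ K₂ τ t ^ 2 * (∫ x in Ioo (0:ℝ) 1, a x * zx x t ^ 2) +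
              (∫ p in Ioo (0:ℝ) 1 ×ˢ Ioo (0:ℝ) T,
                rho1 s K₁ K₂ τ p.2 ^ 2 * (zt p.1 p.2 ^ 2 + azxx p.1 p.2 ^ 2))
            ≤ C * ((∫ p in Ioo (0:ℝ) 1 ×ˢ Ioo (0:ℝ) T,
                      rho0 s K₁ τ p.2 ^ 2 * z p.1 p.2 ^ 2) +
                   (∫ p in Ioo α₁ β₁ ×ˢ Ioo (0:ℝ) T,
                      rho1 s K₁ K₂ τ p.2 ^ 2 * h p.1 p.2 ^ 2) +
                   (∫ p in Ioo (0:ℝ) 1 ×ˢ Ioo (0:ℝ) T,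
                      rho2 s K₁ K₂ ζ₀ τ p.2 ^ 2 * G p.1 p.2 ^ 2) +
                   (∫ x in Ioo (0:ℝ) 1, z₀ x ^ 2) +
                   (∫ x in Ioo (0:ℝ) 1, a x * z₀' x ^ 2)) := by
  have hM : 0 < M := hm.trans_le hmM
  obtain ⟨R, hR, r', hw⟩ := weights hs hK₁ hK₂ hτ₀ hζ₀ hC₃ hτ_deriv hτ_lb hτ_grow
  set r := rho1 s K₁ K₂ τ with hr
  set K := 4 / m + 4 / m * R ^ 2 + 4 * Λ ^ 2 / m * R ^ 2 + (4 * Λ ^ 2 / m) ^ 2 / m * R ^ 2 with hK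
  have hK0 : 0 < K := by positivity
  set c0 := min (1 / M) (m / 2) with hc0
  have hc0p : 0 < c0 := lt_min (by positivity) (by positivity)
  refine ⟨(1 + 1 / c0) * (r 0 ^ 2 + K), by positivity, ?_⟩
  intro b c₁ d₁ z zx zt azxx h G z₀ z₀' _ hb hcd hz hzx hazx hzt heq hbc hz0 hz0' hiz0
    hF hI1 hI2 hI3 hie t ht
  have loc := fun (S : ℝ) (hS : 0 < S) (hST : S < T) =>
    local_est hS hST hm hR ha_cont ha_nonneg ha_deriv ha'_cont hω hw hb hcd hz hzx hazx hzt heq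
      hbc hF hI1 hI2 hI3 hie
  simp only [← hK, ← hc0] at loc
  have e0 : ∫ x in Ioo (0:ℝ) 1, a x * zx x 0 ^ 2 = ∫ x in Ioo (0:ℝ) 1, a x * z₀' x ^ 2 := by
    refine setIntegral_congr_fun measurableSet_Ioo fun x hx => ?_
    have h1 := hzx x hx 0 ⟨le_rfl, hT⟩
    have h2 : (fun w => z w 0) = z₀ := funext hz0
    rw [h2] at h1
    show a x * zx x 0 ^ 2 = a x * z₀' x ^ 2
    rw [h1.unique (hz0' x hx)]
  rw [e0] at loc
  have p0 : 0 ≤ ∫ x in Ioo (0:ℝ) 1, a x * z₀' x ^ 2 :=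
    setIntegral_nonneg measurableSet_Ioo fun x hx =>
      mul_nonneg (ha_nonneg x ⟨hx.1.le, hx.2.le⟩) (sq_nonneg _)
  have p1 : 0 ≤ ∫ p in Ioo (0:ℝ) 1 ×ˢ Ioo (0:ℝ) T, rho0 s K₁ τ p.2 ^ 2 * z p.1 p.2 ^ 2 :=
    integral_nonneg fun p => mul_nonneg (sq_nonneg _) (sq_nonneg _)
  have p2 : 0 ≤ ∫ p in Ioo α₁ β₁ ×ˢ Ioo (0:ℝ) T, r p.2 ^ 2 * h p.1 p.2 ^ 2 :=
    integral_nonneg fun p => mul_nonneg (sq_nonneg _) (sq_nonneg _)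
  have p3 : 0 ≤ ∫ p in Ioo (0:ℝ) 1 ×ˢ Ioo (0:ℝ) T, rho2 s K₁ K₂ ζ₀ τ p.2 ^ 2 * G p.1 p.2 ^ 2 :=
    integral_nonneg fun p => mul_nonneg (sq_nonneg _) (sq_nonneg _)
  have p4 : 0 ≤ ∫ x in Ioo (0:ℝ) 1, z₀ x ^ 2 := integral_nonneg fun p => sq_nonneg _
  have pe : ∀ S ∈ Ico (0:ℝ) T, 0 ≤ ∫ x in Ioo (0:ℝ) 1, a x * zx x S ^ 2 := fun S _ =>
    setIntegral_nonneg measurableSet_Ioo fun x hx =>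
      mul_nonneg (ha_nonneg x ⟨hx.1.le, hx.2.le⟩) (sq_nonneg _)
  have pF : ∀ S, 0 ≤ ∫ p in Ioo (0:ℝ) 1 ×ˢ Ioo (0:ℝ) S,
      r p.2 ^ 2 * (zt p.1 p.2 ^ 2 + azxx p.1 p.2 ^ 2) := fun S =>
    integral_nonneg fun p => mul_nonneg (sq_nonneg _) (add_nonneg (sq_nonneg _) (sq_nonneg _))
  -- passage to the limit in the time horizon
  have lim : Filter.Tendsto (fun n : ℕ => ∫ p in Ioo (0:ℝ) 1 ×ˢ Ioo (0:ℝ) (T - T / (n + 2)),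
      r p.2 ^ 2 * (zt p.1 p.2 ^ 2 + azxx p.1 p.2 ^ 2)) Filter.atTop
      (nhds (∫ p in Ioo (0:ℝ) 1 ×ˢ Ioo (0:ℝ) T,
        r p.2 ^ 2 * (zt p.1 p.2 ^ 2 + azxx p.1 p.2 ^ 2))) := by
    have hU : (⋃ n : ℕ, Ioo (0:ℝ) 1 ×ˢ Ioo (0:ℝ) (T - T / (n + 2))) =
        Ioo (0:ℝ) 1 ×ˢ Ioo (0:ℝ) T := by
      refine subset_antisymm (iUnion_subset fun n => prod_mono_right (Ioo_subset_Ioo_right ?_)) ?_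
      · have : 0 < T / ((n:ℝ) + 2) := by positivity
        linarith
      · rintro p ⟨hp1, hp2⟩
        obtain ⟨n, hn⟩ := exists_nat_gt (T / (T - p.2))
        have hd : 0 < T - p.2 := sub_pos.2 hp2.2
        refine mem_iUnion.2 ⟨n, hp1, hp2.1, ?_⟩
        have hn2 : T < n * (T - p.2) := (div_lt_iff₀ hd).1 hn
        have : T / ((n:ℝ) + 2) < T - p.2 := by
          rw [div_lt_iff₀ (by positivity)]
          nlinarith
        linarith
    have := tendsto_setIntegral_of_monotone (μ := volume)
      (f := fun p : ℝ × ℝ => r p.2 ^ 2 * (zt p.1 p.2 ^ 2 + azxx p.1 p.2 ^ 2))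
      (s := fun n : ℕ => Ioo (0:ℝ) 1 ×ˢ Ioo (0:ℝ) (T - T / (n + 2)))
      (fun n => measurableSet_Ioo.prod measurableSet_Ioo)
      (fun i j hij => by
        refine prod_mono_right (Ioo_subset_Ioo_right ?_)
        have hij' : (i:ℝ) ≤ j := by exact_mod_cast hij
        have : T / ((j:ℝ) + 2) ≤ T / ((i:ℝ) + 2) :=
          div_le_div_of_nonneg_left hT.le (by positivity) (by linarith)
        linarith)
      (by rw [hU]; exact hF)
    rwa [hU] at this
  set E0 := ∫ x in Ioo (0:ℝ) 1, a x * z₀' x ^ 2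
  set J1 := ∫ p in Ioo (0:ℝ) 1 ×ˢ Ioo (0:ℝ) T, rho0 s K₁ τ p.2 ^ 2 * z p.1 p.2 ^ 2
  set J2 := ∫ p in Ioo α₁ β₁ ×ˢ Ioo (0:ℝ) T, r p.2 ^ 2 * h p.1 p.2 ^ 2
  set J3 := ∫ p in Ioo (0:ℝ) 1 ×ˢ Ioo (0:ℝ) T, rho2 s K₁ K₂ ζ₀ τ p.2 ^ 2 * G p.1 p.2 ^ 2
  set J4 := ∫ x in Ioo (0:ℝ) 1, z₀ x ^ 2
  set JF := ∫ p in Ioo (0:ℝ) 1 ×ˢ Ioo (0:ℝ) T, r p.2 ^ 2 * (zt p.1 p.2 ^ 2 + azxx p.1 p.2 ^ 2)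
  set B := r 0 ^ 2 * E0 + K * (J1 + J2 + J3) with hB
  have b1 : c0 * JF ≤ B := by
    refine le_of_tendsto (lim.const_mul c0) (Filter.Eventually.of_forall fun n => ?_)
    have q1 : T / ((n:ℝ) + 2) < T := by
      rw [div_lt_iff₀ (by positivity)]
      nlinarith [(Nat.cast_nonneg n : (0:ℝ) ≤ n)]
    have q2 : 0 < T / ((n:ℝ) + 2) := by positivity
    have := loc (T - T / (n + 2)) (by linarith) (by linarith)
    have := mul_nonneg (sq_nonneg (r (T - T / ((n:ℝ) + 2))))
      (pe (T - T / (n + 2)) ⟨by linarith, by linarith⟩)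
    linarith
  have b2 : r t ^ 2 * (∫ x in Ioo (0:ℝ) 1, a x * zx x t ^ 2) ≤ B := by
    rcases ht.1.eq_or_lt with h0 | h0
    · rw [← h0, e0]
      have : 0 ≤ K * (J1 + J2 + J3) := by positivity
      linarith
    · have := loc t h0 ht.2
      have := mul_nonneg hc0p.le (pF t)
      linarith
  have b3 : JF ≤ 1 / c0 * B := by
    rw [one_div, ← div_eq_inv_mul, le_div_iff₀ hc0p]
    linarith
  have b4 : B ≤ (r 0 ^ 2 + K) * (J1 + J2 + J3 + J4 + E0) := by
    have q1 : 0 ≤ r 0 ^ 2 * (J1 + J2 + J3 + J4) := by positivity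
    have q2 : 0 ≤ K * (J4 + E0) := by positivity
    rw [hB]
    linarith
  calc _ ≤ B + 1 / c0 * B := add_le_add b2 b3
    _ = (1 + 1 / c0) * B := by ring
    _ ≤ (1 + 1 / c0) * ((r 0 ^ 2 + K) * (J1 + J2 + J3 + J4 + E0)) :=
      mul_le_mul_of_nonneg_left b4 (by positivity)
    _ = _ := by ring
end
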